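/- Let φ : [0,∞) → [0,∞) be a non-decreasing function with φ(0) = 0 and φ(t)/t → 0 as t → ∞. There exists a time T ≥ max{T₀(φ), δ(CS(f),CS(h)) + d_f} such that for all t ≥ T, the set 𝒞(u(·,t)) ∩ (CS(h) + φ(t)Bⁿ) consists of exactly one point, where 𝒞(u(·,t)) = {x in the interior of the support of u(·,t) : ∇_x u(x,t) = 0}. -/

import Mathlib

open Real Set Filter MeasureTheory Metric Pointwise
open scoped Nat Topology

noncomputable section

variable {n : ℕ}

/-- The Laplacian of `v : ℝⁿ → ℝ` at `x`, as the sum of second partial derivatives. -/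
def lap (v : EuclideanSpace ℝ (Fin n) → ℝ) (x : EuclideanSpace ℝ (Fin n)) : ℝ :=
  ∑ i : Fin n, iteratedDeriv 2 (fun a : ℝ => v (x + a • EuclideanSpace.single i (1 : ℝ))) 0

/-- `CS(φ)`: the convex hull of the support of `φ`. -/
def CS (v : EuclideanSpace ℝ (Fin n) → ℝ) : Set (EuclideanSpace ℝ (Fin n)) :=
  convexHull ℝ (tsupport v)

/-- `d_φ`: the diameter of the support of `φ`. -/
def dsupp (v : EuclideanSpace ℝ (Fin n) → ℝ) : ℝ := Metric.diam (tsupport v)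

/-- `δ(K,L) = sup_{η ∈ L} dist(η, K)`. -/
def deltaCC (K L : Set (EuclideanSpace ℝ (Fin n))) : ℝ :=
  sSup ((fun η => Metric.infDist η K) '' L)

/-- The centroid `m_h = (∫ h(y) y dy)/(∫ h(y) dy)`. -/
def centroid (h : EuclideanSpace ℝ (Fin n) → ℝ) : EuclideanSpace ℝ (Fin n) :=
  (∫ y, h y)⁻¹ • ∫ y, h y • y

/-- `T₀(φ) = min{T ≥ 0 : ∀ t ≥ T, t ≥ φ(t) + max{d_h, δ(CS(h),CS(f)) + d_f}}`, `h = f + g`. -/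
def T0 (f g : EuclideanSpace ℝ (Fin n) → ℝ) (phi : ℝ → ℝ) : ℝ :=
  sInf {T : ℝ | 0 ≤ T ∧ ∀ t ≥ T,
    phi t + max (dsupp (f + g)) (deltaCC (CS (f + g)) (CS f) + dsupp f) ≤ t}

/-- Sobolev `W^{ℓ,∞}`-type norm: sum of sup-norms of the iterated derivatives up to order `ℓ`. -/
def sobNorm (ℓ : ℕ) (v : EuclideanSpace ℝ (Fin n) → ℝ) : ℝ :=
  ∑ i ∈ Finset.range (ℓ + 1), ⨆ x, ‖iteratedFDeriv ℝ i v x‖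

/-- The `L¹` norm. -/
def L1norm (v : EuclideanSpace ℝ (Fin n) → ℝ) : ℝ := ∫ y, |v y|

/-- The sup norm. -/
def LinfNorm (v : EuclideanSpace ℝ (Fin n) → ℝ) : ℝ := ⨆ x, |v x|

/-- `𝒞(v)`: the critical points of `v` lying in the interior of its support. -/
def critSet (v : EuclideanSpace ℝ (Fin n) → ℝ) : Set (EuclideanSpace ℝ (Fin n)) :=
  {x | x ∈ interior (tsupport v) ∧ gradient v x = 0}


local notation "𝔼" => EuclideanSpace ℝ (Fin n)

/-- A classical solution `u` of the damped wave equation, together with its first derivatives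
`ut`, `ux` and its second derivatives `utt`, `utx`. -/
structure DampedWave (f g : 𝔼 → ℝ) (u ut utt : 𝔼 → ℝ → ℝ) (ux utx : Fin n → 𝔼 → ℝ → ℝ) : Prop where
  cont_u : ContinuousOn (fun p : 𝔼 × ℝ => u p.1 p.2) (univ ×ˢ Ici 0)
  cont_ut : ContinuousOn (fun p : 𝔼 × ℝ => ut p.1 p.2) (univ ×ˢ Ici 0)
  cont_ux : ∀ i, ContinuousOn (fun p : 𝔼 × ℝ => ux i p.1 p.2) (univ ×ˢ Ici 0)
  cont_utt : ContinuousOn (fun p : 𝔼 × ℝ => utt p.1 p.2) (univ ×ˢ Ici 0)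
  cont_utx : ∀ i, ContinuousOn (fun p : 𝔼 × ℝ => utx i p.1 p.2) (univ ×ˢ Ici 0)
  contDiff_u : ∀ t, 0 ≤ t → ContDiff ℝ 2 (fun x => u x t)
  contDiff_ut : ∀ t, 0 ≤ t → ContDiff ℝ 1 (fun x => ut x t)
  contDiff_ux : ∀ i t, 0 ≤ t → ContDiff ℝ 1 (fun x => ux i x t)
  hasDerivAt_u : ∀ x t, 0 < t → HasDerivAt (fun s => u x s) (ut x t) t
  hasDerivAt_ut : ∀ x t, 0 < t → HasDerivAt (fun s => ut x s) (utt x t) t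
  hasDerivAt_ux : ∀ i x t, 0 < t → HasDerivAt (fun s => ux i x s) (utx i x t) t
  fderiv_u : ∀ i x t, 0 ≤ t →
    fderiv ℝ (fun z => u z t) x (EuclideanSpace.single i (1 : ℝ)) = ux i x t
  fderiv_ut : ∀ i x t, 0 < t →
    fderiv ℝ (fun z => ut z t) x (EuclideanSpace.single i (1 : ℝ)) = utx i x t
  pde : ∀ x t, 0 < t →
    utt x t = (∑ i, fderiv ℝ (fun z => ux i z t) x (EuclideanSpace.single i (1 : ℝ))) - ut x t
  init_u : ∀ x, u x 0 = f x
  init_ut : ∀ x, ut x 0 = g x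

theorem exists_dampedWave (f g : 𝔼 → ℝ) (u : 𝔼 → ℝ → ℝ)
    (hreg : ContDiffOn ℝ 2 (fun p : 𝔼 × ℝ => u p.1 p.2) (univ ×ˢ Ici 0))
    (hpde : ∀ x, ∀ t > (0 : ℝ),
      deriv (deriv (fun s => u x s)) t - lap (fun z => u z t) x
        + deriv (fun s => u x s) t = 0)
    (hu0 : ∀ x, u x 0 = f x)
    (hu1 : ∀ x, derivWithin (fun s => u x s) (Ici 0) 0 = g x) :
    ∃ ut utt ux utx, DampedWave f g u ut utt ux utx := by
  set S : Set (𝔼 × ℝ) := univ ×ˢ Ici 0 with hS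
  have hSu : UniqueDiffOn ℝ S := uniqueDiffOn_univ.prod (uniqueDiffOn_Ici 0)
  set U : 𝔼 × ℝ → ℝ := fun p => u p.1 p.2 with hU
  set D := fderivWithin ℝ U S with hDdef
  have hD : ContDiffOn ℝ 1 D S := hreg.fderivWithin hSu (by norm_num)
  set D2 := fderivWithin ℝ D S with hD2def
  have hD2 : ContinuousOn D2 S := hD.continuousOn_fderivWithin hSu le_rfl
  have hmem : ∀ (x : 𝔼) (t : ℝ), 0 ≤ t → (x, t) ∈ S := fun x t ht => ⟨mem_univ _, ht⟩
  have hnhds : ∀ (x : 𝔼) (t : ℝ), 0 < t → S ∈ 𝓝 (x, t) := fun x t ht =>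
    prod_mem_nhds univ_mem (Ici_mem_nhds ht)
  have hUD : ∀ (x : 𝔼) (t : ℝ), 0 ≤ t → HasFDerivWithinAt U (D (x, t)) S (x, t) := fun x t ht =>
    ((hreg.differentiableOn (by norm_num)) _ (hmem x t ht)).hasFDerivWithinAt
  have hDD : ∀ (x : 𝔼) (t : ℝ), 0 ≤ t → HasFDerivWithinAt D (D2 (x, t)) S (x, t) := fun x t ht =>
    ((hD.differentiableOn (by norm_num)) _ (hmem x t ht)).hasFDerivWithinAt
  have htime : ∀ (x : 𝔼) (t : ℝ), HasDerivAt (fun s : ℝ => (x, s)) ((0 : 𝔼), (1 : ℝ)) t :=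
    fun x t => (hasDerivAt_const t x).prodMk (hasDerivAt_id t)
  have hspace : ∀ (x : 𝔼) (t : ℝ),
      HasFDerivAt (fun z : 𝔼 => (z, t)) (ContinuousLinearMap.inl ℝ 𝔼 ℝ) x := fun x t =>
    hasFDerivAt_prodMk_left x t
  have hmaps : ∀ (t : ℝ), 0 ≤ t → MapsTo (fun z : 𝔼 => (z, t)) univ S := fun t ht z _ => hmem z t ht
  have hux : ∀ (x : 𝔼) (t : ℝ), 0 ≤ t →
      HasFDerivAt (fun z => u z t) ((D (x, t)).comp (ContinuousLinearMap.inl ℝ 𝔼 ℝ)) x := by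
    intro x t ht
    have := (hUD x t ht).comp x (hspace x t).hasFDerivWithinAt (hmaps t ht)
    exact hasFDerivWithinAt_univ.1 this
  have hDx : ∀ (x : 𝔼) (t : ℝ), 0 ≤ t →
      HasFDerivAt (fun z => D (z, t)) ((D2 (x, t)).comp (ContinuousLinearMap.inl ℝ 𝔼 ℝ)) x := by
    intro x t ht
    have := (hDD x t ht).comp x (hspace x t).hasFDerivWithinAt (hmaps t ht)
    exact hasFDerivWithinAt_univ.1 this
  have hDt : ∀ (x : 𝔼) (t : ℝ), 0 < t →
      HasDerivAt (fun s => D (x, s)) (D2 (x, t) (0, 1)) t := by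
    intro x t ht
    exact ((hDD x t ht.le).hasFDerivAt (hnhds x t ht)).comp_hasDerivAt t (htime x t)
  have hcd : ∀ t, 0 ≤ t → ContDiff ℝ 1 (fun z : 𝔼 => D (z, t)) := by
    intro t ht
    exact contDiffOn_univ.1 (hD.comp (contDiff_prodMk_left t).contDiffOn (hmaps t ht))
  have hut : ∀ x t, 0 < t → HasDerivAt (fun s => u x s) (D (x, t) (0, 1)) t := by
    intro x t ht
    exact ((hUD x t ht.le).hasFDerivAt (hnhds x t ht)).comp_hasDerivAt t (htime x t)
  have hutt : ∀ x t, 0 < t → HasDerivAt (fun s => D (x, s) (0, 1)) (D2 (x, t) (0, 1) (0, 1)) t :=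
    fun x t ht => by simpa using (hDt x t ht).clm_apply (hasDerivAt_const t ((0 : 𝔼), (1 : ℝ)))
  have hDx' : ∀ (v : 𝔼 × ℝ) (x : 𝔼) (t : ℝ), 0 ≤ t → ∀ w : 𝔼,
      fderiv ℝ (fun z => D (z, t) v) x w = D2 (x, t) (w, 0) v := by
    intro v x t ht w
    have := ((hDx x t ht).clm_apply (hasFDerivAt_const v x)).fderiv
    rw [this]
    simp
  refine ⟨fun x t => D (x, t) (0, 1), fun x t => D2 (x, t) (0, 1) (0, 1),
    fun i x t => D (x, t) (EuclideanSpace.single i (1 : ℝ), 0),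
    fun i x t => D2 (x, t) (0, 1) (EuclideanSpace.single i (1 : ℝ), 0), ?_⟩
  constructor
  · exact hreg.continuousOn
  · exact hD.continuousOn.clm_apply continuousOn_const
  · exact fun i => hD.continuousOn.clm_apply continuousOn_const
  · exact (hD2.clm_apply continuousOn_const).clm_apply continuousOn_const
  · exact fun i => (hD2.clm_apply continuousOn_const).clm_apply continuousOn_const
  · intro t ht
    exact contDiffOn_univ.1 (hreg.comp (contDiff_prodMk_left t).contDiffOn (hmaps t ht))
  · exact fun t ht => (hcd t ht).clm_apply contDiff_const
  · exact fun i t ht => (hcd t ht).clm_apply contDiff_const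
  · exact hut
  · exact hutt
  · intro i x t ht
    simpa using (hDt x t ht).clm_apply
      (hasDerivAt_const t (EuclideanSpace.single i (1 : ℝ), (0 : ℝ)))
  · intro i x t ht
    rw [(hux x t ht).fderiv]
    simp
  · intro i x t ht
    rw [hDx' _ x t ht.le]
    have h2 : ContDiffAt ℝ 2 U (x, t) := hreg.contDiffAt (hnhds x t ht)
    have hsymm := h2.isSymmSndFDerivAt (by simp)
    have heq : fderiv ℝ (fderiv ℝ U) (x, t) = D2 (x, t) := by
      have h3 : fderiv ℝ U =ᶠ[𝓝 (x, t)] D := by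
        filter_upwards [eventually_mem_nhds_iff.2 (hnhds x t ht)] with p hp
        exact (fderivWithin_of_mem_nhds hp).symm
      rw [h3.fderiv_eq, hD2def, fderivWithin_of_mem_nhds (hnhds x t ht)]
    have := hsymm (EuclideanSpace.single i (1 : ℝ), 0) (0, 1)
    rwa [heq] at this
  · intro x t ht
    have h1 := hpde x t ht
    have h2 : deriv (fun s => u x s) t = D (x, t) (0, 1) := (hut x t ht).deriv
    have h3 : deriv (deriv (fun s => u x s)) t = D2 (x, t) (0, 1) (0, 1) := by
      have : deriv (fun s => u x s) =ᶠ[𝓝 t] fun s => D (x, s) (0, 1) := by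
        filter_upwards [Ioi_mem_nhds ht] with s hs
        exact (hut x s hs).deriv
      rw [this.deriv_eq, (hutt x t ht).deriv]
    have h4 : lap (fun z => u z t) x = ∑ i, fderiv ℝ
        (fun z => D (z, t) (EuclideanSpace.single i (1 : ℝ), 0)) x
          (EuclideanSpace.single i (1 : ℝ)) := by
      refine Finset.sum_congr rfl fun i _ => ?_
      have hline : ∀ a : ℝ, HasDerivAt (fun a : ℝ => x + a • EuclideanSpace.single i (1 : ℝ))
          (EuclideanSpace.single i (1 : ℝ)) a := by
        intro a
        simpa using ((hasDerivAt_id a).smul_const (EuclideanSpace.single i (1 : ℝ))).const_add x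
      have hd : deriv (fun a : ℝ => u (x + a • EuclideanSpace.single i (1 : ℝ)) t) =
          fun a => D (x + a • EuclideanSpace.single i (1 : ℝ), t)
            (EuclideanSpace.single i (1 : ℝ), 0) := by
        funext a
        have := (hux (x + a • EuclideanSpace.single i (1 : ℝ)) t ht.le).comp_hasDerivAt a (hline a)
        simpa [Function.comp_def] using this.deriv
      rw [iteratedDeriv_succ, iteratedDeriv_one, hd]
      have h5 : DifferentiableAt ℝ (fun z => D (z, t) (EuclideanSpace.single i (1 : ℝ), 0))
          (x + (0 : ℝ) • EuclideanSpace.single i (1 : ℝ)) :=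
        (((hcd t ht.le).clm_apply contDiff_const).differentiable (by norm_num)) _
      have := h5.hasFDerivAt.comp_hasDerivAt (0 : ℝ) (hline 0)
      simpa [Function.comp_def] using this.deriv
    rw [h2, h3, h4] at h1
    linarith
  · exact hu0
  · intro x
    rw [← hu1 x]
    have : HasDerivWithinAt (fun s => u x s) (D (x, 0) (0, 1)) (Ici 0) 0 :=
      (hUD x 0 le_rfl).comp_hasDerivWithinAt 0 (htime x 0).hasDerivWithinAt
        (fun s hs => hmem x s hs)
    exact (this.derivWithin (uniqueDiffOn_Ici 0 0 self_mem_Ici)).symm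


theorem continuous_slice {G : Type*} [TopologicalSpace G] {F : 𝔼 → ℝ → G}
    (hF : ContinuousOn (fun p : 𝔼 × ℝ => F p.1 p.2) (univ ×ˢ Ici 0)) {t : ℝ} (ht : 0 ≤ t) :
    Continuous fun x => F x t :=
  hF.comp_continuous (f := fun x => (x, t)) (by fun_prop) fun _ => ⟨mem_univ _, ht⟩

theorem hasDerivAt_integral_of_compact {G : Type*} [NormedAddCommGroup G] [NormedSpace ℝ G]
    {F F' : 𝔼 → ℝ → G} {K : Set 𝔼} {T t : ℝ} (hK : IsCompact K)
    (hF : ContinuousOn (fun p : 𝔼 × ℝ => F p.1 p.2) (univ ×ˢ Ici 0))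
    (hF' : ContinuousOn (fun p : 𝔼 × ℝ => F' p.1 p.2) (univ ×ˢ Ici 0))
    (hder : ∀ x s, 0 < s → HasDerivAt (F x) (F' x s) s)
    (hsupp : ∀ x ∉ K, ∀ s ∈ Icc 0 T, F x s = 0) (ht : t ∈ Ioo 0 T) :
    HasDerivAt (fun s => ∫ x, F x s) (∫ x, F' x t) t := by
  have hsupp' : ∀ x ∉ K, ∀ s ∈ Ioo 0 T, F' x s = 0 := by
    intro x hx s hs
    have h0 : F x =ᶠ[𝓝 s] fun _ => (0 : G) := by
      filter_upwards [Ioo_mem_nhds hs.1 hs.2] with r hr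
      exact hsupp x hx r ⟨hr.1.le, hr.2.le⟩
    exact (hder x s hs.1).unique (h0.hasDerivAt_iff.2 (hasDerivAt_const s 0))
  obtain ⟨M, hM⟩ := (hK.prod (isCompact_Icc (a := (0 : ℝ)) (b := T))).exists_bound_of_continuousOn
    (hF'.mono fun p hp => ⟨mem_univ _, hp.2.1⟩)
  refine (hasDerivAt_integral_of_dominated_loc_of_deriv_le (F := fun s x => F x s)
    (F' := fun s x => F' x s) (bound := K.indicator fun _ => M)
    (Ioo_mem_nhds ht.1 ht.2) ?_ ?_ ?_ ?_ ?_ ?_).2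
  · filter_upwards [Ioo_mem_nhds ht.1 ht.2] with s hs
    exact (continuous_slice hF hs.1.le).aestronglyMeasurable
  · refine (continuous_slice hF ht.1.le).integrable_of_hasCompactSupport ?_
    exact HasCompactSupport.intro hK fun x hx => hsupp x hx t ⟨ht.1.le, ht.2.le⟩
  · exact (continuous_slice hF' ht.1.le).aestronglyMeasurable
  · refine Eventually.of_forall fun x s hs => ?_
    by_cases hx : x ∈ K
    · simpa [hx] using hM (x, s) ⟨hx, hs.1.le, hs.2.le⟩
    · simp [hx, hsupp' x hx s hs]
  · exact (integrable_indicator_iff hK.measurableSet).2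
      (integrableOn_const hK.measure_lt_top.ne)
  · exact Eventually.of_forall fun x s hs => hder x s hs.1

theorem continuousOn_integral_Icc {G : Type*} [NormedAddCommGroup G] [NormedSpace ℝ G]
    {F : 𝔼 → ℝ → G} {K : Set 𝔼} {T : ℝ} (hK : IsCompact K)
    (hF : ContinuousOn (fun p : 𝔼 × ℝ => F p.1 p.2) (univ ×ˢ Ici 0))
    (hsupp : ∀ x ∉ K, ∀ s ∈ Icc 0 T, F x s = 0) :
    ContinuousOn (fun s => ∫ x, F x s) (Icc 0 T) := by
  refine continuousOn_integral_of_compact_support (f := fun s x => F x s) hK ?_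
    (fun p x hp hx => hsupp x hx p hp)
  exact hF.comp (continuous_swap.continuousOn) fun p hp => ⟨mem_univ _, hp.1.1⟩

theorem integral_smul_fderiv_of_compact {G : Type*} [NormedAddCommGroup G] [NormedSpace ℝ G]
    {ψ : 𝔼 → ℝ} {e : 𝔼 → G} (hψ : ContDiff ℝ 1 ψ) (hψc : HasCompactSupport ψ)
    (he : ContDiff ℝ 1 e) (v : 𝔼) :
    ∫ x, ψ x • fderiv ℝ e x v = -∫ x, fderiv ℝ ψ x v • e x := by
  have hψ' : Continuous fun x => fderiv ℝ ψ x v :=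
    (hψ.continuous_fderiv one_ne_zero).clm_apply continuous_const
  have he' : Continuous fun x => fderiv ℝ e x v :=
    (he.continuous_fderiv one_ne_zero).clm_apply continuous_const
  have hψc' : HasCompactSupport fun x => fderiv ℝ ψ x v := hψc.fderiv_apply (𝕜 := ℝ) v
  exact integral_smul_fderiv_eq_neg_fderiv_smul_of_integrable
    ((hψ'.smul he.continuous).integrable_of_hasCompactSupport hψc'.smul_right)
    ((hψ.continuous.smul he').integrable_of_hasCompactSupport hψc.smul_right)
    ((hψ.continuous.smul he.continuous).integrable_of_hasCompactSupport hψc.smul_right)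
    (fun x _ => (hψ.differentiable one_ne_zero) x) (fun x _ => (he.differentiable one_ne_zero) x)


/-- Energy density of the damped wave equation. -/
def energyDensity (u ut : 𝔼 → ℝ → ℝ) (ux : Fin n → 𝔼 → ℝ → ℝ) (x : 𝔼) (t : ℝ) : ℝ :=
  (ut x t ^ 2 + ∑ i, ux i x t ^ 2 + u x t ^ 2) / 2

/-- Smoothed distance to `x₀`. -/
def smoothDist (ε : ℝ) (x₀ x : 𝔼) : ℝ := √(ε ^ 2 + ‖x - x₀‖ ^ 2)

theorem smoothDist_arg_pos {ε : ℝ} (hε : 0 < ε) (x₀ x : 𝔼) : 0 < ε ^ 2 + ‖x - x₀‖ ^ 2 := by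
  positivity

theorem contDiff_smoothDist {ε : ℝ} (hε : 0 < ε) (x₀ : 𝔼) : ContDiff ℝ 2 (smoothDist ε x₀) := by
  unfold smoothDist
  exact ContDiff.sqrt (contDiff_const.add ((contDiff_id.sub contDiff_const).norm_sq ℝ))
    fun x => (smoothDist_arg_pos hε x₀ x).ne'

theorem norm_sub_lt_smoothDist {ε : ℝ} (hε : 0 < ε) (x₀ x : 𝔼) :
    ‖x - x₀‖ < smoothDist ε x₀ x := by
  apply Real.lt_sqrt_of_sq_lt
  nlinarith [sq_pos_of_pos hε]

theorem fderiv_smoothDist {ε : ℝ} (hε : 0 < ε) (x₀ x : 𝔼) (i : Fin n) :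
    fderiv ℝ (smoothDist ε x₀) x (EuclideanSpace.single i (1 : ℝ)) =
      (x - x₀) i / smoothDist ε x₀ x := by
  have h1 : HasFDerivAt (fun y : 𝔼 => ε ^ 2 + ‖y - x₀‖ ^ 2) _ x :=
    (((hasFDerivAt_id x).sub_const x₀).norm_sq).const_add (ε ^ 2)
  have h2 := h1.sqrt (smoothDist_arg_pos hε x₀ x).ne'
  have h3 : smoothDist ε x₀ = fun y => √(ε ^ 2 + ‖y - x₀‖ ^ 2) := rfl
  rw [h3, h2.fderiv]
  simp [EuclideanSpace.inner_single_right]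
  field_simp

theorem sum_sq_fderiv_smoothDist_le {ε : ℝ} (hε : 0 < ε) (x₀ x : 𝔼) :
    ∑ i, fderiv ℝ (smoothDist ε x₀) x (EuclideanSpace.single i (1 : ℝ)) ^ 2 ≤ 1 := by
  simp_rw [fderiv_smoothDist hε, div_pow]
  rw [← Finset.sum_div, ← EuclideanSpace.real_norm_sq_eq]
  have h := norm_sub_lt_smoothDist hε x₀ x
  have h0 := norm_nonneg (x - x₀)
  rw [div_le_one (by nlinarith)]
  nlinarith

namespace DampedWave

variable {f g : EuclideanSpace ℝ (Fin n) → ℝ} {u ut utt : EuclideanSpace ℝ (Fin n) → ℝ → ℝ}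
  {ux utx : Fin n → EuclideanSpace ℝ (Fin n) → ℝ → ℝ}

theorem eq_zero_of_ball (W : DampedWave f g u ut utt ux utx) {x₀ : 𝔼} {r t₀ : ℝ}
    (hf : ∀ x, ‖x - x₀‖ < r → f x = 0) (hg : ∀ x, ‖x - x₀‖ < r → g x = 0)
    (ht₀ : 0 ≤ t₀) (hr : t₀ < r) : u x₀ t₀ = 0 := by
  obtain ⟨ε, hε, hεr⟩ : ∃ ε, 0 < ε ∧ t₀ + ε < r := ⟨(r - t₀) / 2, by linarith, by linarith⟩
  set b : Fin n → 𝔼 := fun i => EuclideanSpace.single i (1 : ℝ) with hb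
  set σ := smoothDist ε x₀ with hσ
  have hσ2 : ContDiff ℝ 2 σ := contDiff_smoothDist hε x₀
  have hσc : Continuous σ := hσ2.continuous
  have hsm : ContDiff ℝ 2 Real.smoothTransition := Real.smoothTransition.contDiff
  set χ : 𝔼 → ℝ → ℝ := fun x t => Real.smoothTransition (r - t - σ x) with hχ
  set χ' : 𝔼 → ℝ → ℝ := fun x t => deriv Real.smoothTransition (r - t - σ x) with hχ'
  have hχ'0 : ∀ x t, 0 ≤ χ' x t := fun x t => Real.smoothTransition.monotone.deriv_nonneg
  have hχ0 : ∀ x t, 0 ≤ χ x t := fun x t => Real.smoothTransition.nonneg _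
  have hsder : ∀ s, HasDerivAt Real.smoothTransition (deriv Real.smoothTransition s) s := fun s =>
    ((hsm.differentiable (by norm_num)) s).hasDerivAt
  have hχc : Continuous fun p : 𝔼 × ℝ => χ p.1 p.2 :=
    hsm.continuous.comp (by fun_prop)
  have hχ'c : Continuous fun p : 𝔼 × ℝ => χ' p.1 p.2 :=
    (hsm.continuous_deriv (by norm_num)).comp (by fun_prop)
  have hχsupp : ∀ x ∉ closedBall x₀ r, ∀ s, 0 ≤ s → χ x s = 0 := by
    intro x hx s hs
    apply Real.smoothTransition.zero_of_nonpos
    rw [mem_closedBall, dist_eq_norm, not_le] at hx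
    linarith [norm_sub_lt_smoothDist hε x₀ x]
  have hχt : ∀ x s, HasDerivAt (χ x) (-χ' x s) s := by
    intro x s
    have h : HasDerivAt (fun s => r - s - σ x) (-1) s := by
      simpa using ((hasDerivAt_id s).const_sub r).sub_const (σ x)
    have h' := (hsder (r - s - σ x)).comp s h
    rw [mul_neg_one] at h'
    exact h'
  have hχcd : ∀ s, ContDiff ℝ 1 fun x => χ x s := fun s =>
    (hsm.comp (contDiff_const.sub hσ2)).of_le (by norm_num)
  have hχx : ∀ x s i, fderiv ℝ (fun x => χ x s) x (b i) = -χ' x s * fderiv ℝ σ x (b i) := by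
    intro x s i
    have h := ((hσ2.differentiable (by norm_num)) x).hasFDerivAt.const_sub (r - s)
    have := (hsder (r - s - σ x)).comp_hasFDerivAt x h
    rw [show (fun x => χ x s) = Real.smoothTransition ∘ fun x => r - s - σ x from rfl, this.fderiv]
    simp [χ']
  set F : 𝔼 → ℝ → ℝ := fun x t => χ x t * energyDensity u ut ux x t with hF
  set F' : 𝔼 → ℝ → ℝ := fun x t => -χ' x t * energyDensity u ut ux x t +
    χ x t * (ut x t * utt x t + ∑ i, ux i x t * utx i x t + u x t * ut x t) with hF'
  have hec : ContinuousOn (fun p : 𝔼 × ℝ => energyDensity u ut ux p.1 p.2) (univ ×ˢ Ici 0) := by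
    unfold energyDensity
    exact (((W.cont_ut.pow 2).add (continuousOn_finsetSum _ fun i _ => (W.cont_ux i).pow 2)).add
      (W.cont_u.pow 2)).div_const 2
  have hFc : ContinuousOn (fun p : 𝔼 × ℝ => F p.1 p.2) (univ ×ˢ Ici 0) :=
    hχc.continuousOn.mul hec
  have hF'c : ContinuousOn (fun p : 𝔼 × ℝ => F' p.1 p.2) (univ ×ˢ Ici 0) :=
    (hχ'c.continuousOn.neg.mul hec).add (hχc.continuousOn.mul
      (((W.cont_ut.mul W.cont_utt).add
        (continuousOn_finsetSum _ fun i _ => (W.cont_ux i).mul (W.cont_utx i))).add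
        (W.cont_u.mul W.cont_ut)))
  have hder : ∀ x s, 0 < s → HasDerivAt (F x) (F' x s) s := by
    intro x s hs
    have h1 := (W.hasDerivAt_ut x s hs).pow 2
    have h2 := (W.hasDerivAt_u x s hs).pow 2
    have h3 := HasDerivAt.fun_sum (u := Finset.univ) fun i _ => (W.hasDerivAt_ux i x s hs).pow 2
    have h4 := ((h1.add h3).add h2).div_const 2
    refine ((hχt x s).mul h4).congr_deriv ?_
    have h5 : ∑ i, ((2 : ℕ) : ℝ) * ux i x s ^ (2 - 1) * utx i x s =
        2 * ∑ i, ux i x s * utx i x s := by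
      rw [Finset.mul_sum]
      exact Finset.sum_congr rfl fun i _ => by
        simp only [Nat.cast_ofNat, Nat.add_one_sub_one, pow_one]; ring
    simp only [hF', energyDensity]
    rw [h5]
    simp only [Pi.add_apply, Pi.pow_apply, Nat.cast_ofNat, Nat.add_one_sub_one, pow_one]
    ring
  have hsupp : ∀ x ∉ closedBall x₀ r, ∀ s, 0 ≤ s → F x s = 0 := fun x hx s hs => by
    simp [F, hχsupp x hx s hs]
  have hK : IsCompact (closedBall x₀ r) := isCompact_closedBall x₀ r
  have he0 : ∀ x s, 0 ≤ energyDensity u ut ux x s := fun x s => by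
    unfold energyDensity; positivity
  have hEder : ∀ s, 0 < s → HasDerivAt (fun s => ∫ x, F x s) (∫ x, F' x s) s := fun s hs =>
    hasDerivAt_integral_of_compact hK hFc hF'c hder (fun x hx s hs => hsupp x hx s hs.1)
      (T := s + 1) ⟨hs, by linarith⟩
  have hle : ∀ s, 0 < s → ∫ x, F' x s ≤ ∫ x, F x s := by
    intro s hs
    set ρ : Fin n → 𝔼 → ℝ := fun i x => χ x s * ux i x s with hρ
    have hρcd : ∀ i, ContDiff ℝ 1 (ρ i) := fun i => (hχcd s).mul (W.contDiff_ux i s hs.le)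
    have hρs : ∀ i, HasCompactSupport (ρ i) := fun i =>
      HasCompactSupport.intro hK fun x hx => by simp [ρ, hχsupp x hx s hs.le]
    have hρx : ∀ i x, fderiv ℝ (ρ i) x (b i) =
        χ x s * fderiv ℝ (fun z => ux i z s) x (b i) - ux i x s * (χ' x s * fderiv ℝ σ x (b i)) := by
      intro i x
      have h := (((hχcd s).differentiable (by norm_num)) x).hasFDerivAt.mul
        (((W.contDiff_ux i s hs.le).differentiable (by norm_num)) x).hasFDerivAt
      have h' := h.fderiv
      rw [show ρ i = (fun x => χ x s) * fun x => ux i x s from rfl, h']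
      simp [hχx]
      ring
    have hibp : ∀ i, ∫ x, ρ i x * utx i x s + fderiv ℝ (ρ i) x (b i) * ut x s = 0 := by
      intro i
      have h := integral_smul_fderiv_of_compact (hρcd i) (hρs i) (W.contDiff_ut s hs.le) (b i)
      simp_rw [hb, W.fderiv_ut _ _ _ hs, smul_eq_mul] at h
      rw [integral_add, h, hb, neg_add_cancel]
      · exact ((hρcd i).continuous.mul (continuous_slice (W.cont_utx i) hs.le)
          ).integrable_of_hasCompactSupport (hρs i).mul_right
      · exact ((((hρcd i).continuous_fderiv one_ne_zero).clm_apply continuous_const).mul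
          (continuous_slice W.cont_ut hs.le)).integrable_of_hasCompactSupport
          ((hρs i).fderiv_apply (𝕜 := ℝ) (b i)).mul_right
    have h_int : ∀ i, Integrable fun x => ρ i x * utx i x s + fderiv ℝ (ρ i) x (b i) * ut x s := by
      intro i
      refine Integrable.add ?_ ?_
      · exact ((hρcd i).continuous.mul (continuous_slice (W.cont_utx i) hs.le)
          ).integrable_of_hasCompactSupport (hρs i).mul_right
      · exact ((((hρcd i).continuous_fderiv one_ne_zero).clm_apply continuous_const).mul
          (continuous_slice W.cont_ut hs.le)).integrable_of_hasCompactSupport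
          ((hρs i).fderiv_apply (𝕜 := ℝ) (b i)).mul_right
    have hF'supp : HasCompactSupport fun x => F' x s := by
      refine HasCompactSupport.intro hK fun x hx => ?_
      have h0 : F x =ᶠ[𝓝 s] fun _ => (0 : ℝ) := by
        filter_upwards [Ioi_mem_nhds hs] with q hq
        exact hsupp x hx q (le_of_lt hq)
      exact (hder x s hs).unique (h0.hasDerivAt_iff.2 (hasDerivAt_const s 0))
    have hF'int : Integrable fun x => F' x s :=
      (continuous_slice hF'c hs.le).integrable_of_hasCompactSupport hF'supp
    have hFint : Integrable fun x => F x s :=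
      (continuous_slice hFc hs.le).integrable_of_hasCompactSupport
        (HasCompactSupport.intro hK fun x hx => hsupp x hx s hs.le)
    have hsumint := integrable_finsetSum Finset.univ fun i _ => h_int i
    calc ∫ x, F' x s = ∫ x, (F' x s -
          ∑ i, (ρ i x * utx i x s + fderiv ℝ (ρ i) x (b i) * ut x s)) := by
          rw [integral_sub hF'int hsumint, integral_finsetSum _ fun i _ => h_int i]
          simp [hibp]
      _ ≤ ∫ x, F x s := by
          refine integral_mono (hF'int.sub hsumint) hFint fun x => ?_
          have hp := W.pde x s hs
          have hs1 := sum_sq_fderiv_smoothDist_le hε x₀ x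
          simp only [hρx]
          simp only [hρ, hF', hF]
          have e1 : ∑ i, (χ x s * ux i x s * utx i x s + (χ x s * fderiv ℝ (fun z => ux i z s) x (b i)
              - ux i x s * (χ' x s * fderiv ℝ σ x (b i))) * ut x s) =
              χ x s * (∑ i, ux i x s * utx i x s) + χ x s * ut x s * (utt x s + ut x s) -
                χ' x s * ∑ i, ux i x s * (ut x s * fderiv ℝ σ x (b i)) := by
            rw [hp, sub_add_cancel, Finset.mul_sum, Finset.mul_sum, Finset.mul_sum,
              ← Finset.sum_add_distrib, ← Finset.sum_sub_distrib]
            exact Finset.sum_congr rfl fun i _ => by ring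
          have e2 : ∑ i, ux i x s * (ut x s * fderiv ℝ σ x (b i)) ≤
              (∑ i, ux i x s ^ 2 + ut x s ^ 2) / 2 := by
            have : ∀ i ∈ Finset.univ, ux i x s * (ut x s * fderiv ℝ σ x (b i)) ≤
                (ux i x s ^ 2 + ut x s ^ 2 * fderiv ℝ σ x (b i) ^ 2) / 2 := fun i _ => by
              nlinarith [sq_nonneg (ux i x s - ut x s * fderiv ℝ σ x (b i))]
            refine (Finset.sum_le_sum this).trans ?_
            rw [← Finset.sum_div, Finset.sum_add_distrib, ← Finset.mul_sum]
            have := mul_le_mul_of_nonneg_left hs1 (sq_nonneg (ut x s))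
            simp only [hσ, hb]
            linarith
          rw [e1]
          have e3 := mul_le_mul_of_nonneg_left e2 (hχ'0 x s)
          have e4 : 0 ≤ χ x s * (∑ i, ux i x s ^ 2) :=
            mul_nonneg (hχ0 x s) (Finset.sum_nonneg fun i _ => sq_nonneg _)
          have e5 := mul_nonneg (hχ'0 x s) (sq_nonneg (u x s))
          have e6 := mul_nonneg (hχ0 x s) (sq_nonneg (ut x s - u x s))
          have e7 := mul_nonneg (hχ0 x s) (sq_nonneg (ut x s))
          simp only [energyDensity]
          nlinarith
  have hE0 : ∫ x, F x 0 = 0 := by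
    have : ∀ x, F x 0 = 0 := by
      intro x
      by_cases hx : ‖x - x₀‖ < r
      · have hux : ∀ i, ux i x 0 = 0 := by
          intro i
          rw [← W.fderiv_u i x 0 le_rfl]
          have : (fun z => u z 0) =ᶠ[𝓝 x] fun _ => (0 : ℝ) := by
            have : ball x₀ r ∈ 𝓝 x := isOpen_ball.mem_nhds (by rwa [mem_ball, dist_eq_norm])
            filter_upwards [this] with z hz
            rw [W.init_u, hf z (by rwa [← dist_eq_norm])]
          rw [this.fderiv_eq]
          simp
        simp [F, energyDensity, W.init_u, W.init_ut, hf x hx, hg x hx, hux]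
      · have : χ x 0 = 0 := by
          apply Real.smoothTransition.zero_of_nonpos
          linarith [norm_sub_lt_smoothDist hε x₀ x]
        simp [F, this]
    simp [this]
  have hanti : AntitoneOn (fun s => Real.exp (-s) * ∫ x, F x s) (Icc 0 t₀) := by
    refine antitoneOn_of_hasDerivWithinAt_nonpos (convex_Icc 0 t₀) ?_
      (f' := fun s => Real.exp (-s) * (∫ x, F' x s) - Real.exp (-s) * ∫ x, F x s) ?_ ?_
    · exact (by fun_prop : Continuous fun s : ℝ => Real.exp (-s)).continuousOn.mul
        (continuousOn_integral_Icc hK hFc fun x hx s hs => hsupp x hx s hs.1)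
    · intro s hs
      rw [interior_Icc] at hs
      have h1 : HasDerivAt (fun s => Real.exp (-s)) (-Real.exp (-s)) s := by
        simpa using (hasDerivAt_neg s).exp
      exact ((h1.mul (hEder s hs.1)).congr_deriv (by ring)).hasDerivWithinAt
    · intro s hs
      rw [interior_Icc] at hs
      nlinarith [hle s hs.1, Real.exp_pos (-s)]
  have hEt : ∫ x, F x t₀ ≤ 0 := by
    have h := hanti ⟨le_rfl, ht₀⟩ ⟨ht₀, le_rfl⟩ ht₀
    simp only [hE0, mul_zero] at h
    nlinarith [Real.exp_pos (-t₀)]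
  by_contra hne
  have hpos : 0 < ∫ x, F x t₀ := by
    refine (continuous_slice hFc ht₀).integral_pos_of_hasCompactSupport_nonneg_nonzero
      (HasCompactSupport.intro hK fun x hx => hsupp x hx t₀ ht₀)
      (fun x => mul_nonneg (hχ0 x t₀) (he0 x t₀)) (x := x₀) ?_
    have h1 : 0 < χ x₀ t₀ := by
      apply Real.smoothTransition.pos_of_pos
      simp [hσ, smoothDist, Real.sqrt_sq hε.le]
      linarith
    have h2 : 0 < energyDensity u ut ux x₀ t₀ := by
      unfold energyDensity
      have : 0 < u x₀ t₀ ^ 2 := by positivity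
      positivity
    exact (mul_pos h1 h2).ne'
  linarith

theorem eq_zero_of_norm_gt (W : DampedWave f g u ut utt ux utx) {R : ℝ}
    (hf : ∀ x, R < ‖x‖ → f x = 0) (hg : ∀ x, R < ‖x‖ → g x = 0) {x : 𝔼} {t : ℝ} (ht : 0 ≤ t)
    (hx : R + t < ‖x‖) : u x t = 0 := by
  have key : ∀ y : 𝔼, ‖y - x‖ < ‖x‖ - R → R < ‖y‖ := fun y hy => by
    have := norm_sub_norm_le x y
    rw [norm_sub_rev] at this
    linarith
  exact W.eq_zero_of_ball (x₀ := x) (r := ‖x‖ - R) (fun y hy => hf y (key y hy))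
    (fun y hy => hg y (key y hy)) ht (by linarith)

end DampedWave


/-- The `i`-th complex frequency `ηᵢ - i ξᵢ`. -/
def freq (ξ η : 𝔼) (i : Fin n) : ℂ := η i - ξ i * Complex.I

/-- The sum of squares of the complex frequencies. -/
def freqSq (ξ η : 𝔼) : ℂ := ∑ i, freq ξ η i ^ 2

/-- The complex exponential `x ↦ exp (⟨η, x⟩ - i ⟨ξ, x⟩)`. -/
def planeWave (ξ η x : 𝔼) : ℂ := Complex.exp (inner ℝ η x - inner ℝ ξ x * Complex.I)

/-- The Fourier–Laplace transform. -/
def fourierLaplace (ψ : 𝔼 → ℝ) (ξ η : 𝔼) : ℂ := ∫ x, ψ x • planeWave ξ η x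

theorem contDiff_planeWave (ξ η : 𝔼) {k : WithTop ℕ∞} : ContDiff ℝ k (planeWave ξ η) := by
  unfold planeWave
  have h : ∀ v : 𝔼, ContDiff ℝ k fun x : 𝔼 => ((inner ℝ v x : ℝ) : ℂ) := fun v =>
    Complex.ofRealCLM.contDiff.comp (contDiff_const.inner ℝ contDiff_id)
  exact ((h η).sub ((h ξ).mul contDiff_const)).cexp

theorem continuous_planeWave (ξ η : 𝔼) : Continuous (planeWave ξ η) :=
  (contDiff_planeWave ξ η (k := 1)).continuous

theorem fderiv_planeWave (ξ η x : 𝔼) (i : Fin n) :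
    fderiv ℝ (planeWave ξ η) x (EuclideanSpace.single i (1 : ℝ)) =
      freq ξ η i * planeWave ξ η x := by
  have h : ∀ v : 𝔼, HasFDerivAt (fun x : 𝔼 => ((inner ℝ v x : ℝ) : ℂ))
      (Complex.ofRealCLM.comp (innerSL ℝ v)) x := fun v =>
    Complex.ofRealCLM.hasFDerivAt.comp x (innerSL ℝ v).hasFDerivAt
  have h2 : HasFDerivAt (planeWave ξ η) _ x := ((h η).fun_sub ((h ξ).mul_const Complex.I)).cexp
  rw [h2.fderiv]
  simp [freq, planeWave, EuclideanSpace.inner_single_right]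
  ring

theorem integrable_smul_planeWave {ψ : 𝔼 → ℝ} (h : Continuous ψ) (hc : HasCompactSupport ψ)
    (ξ η : 𝔼) : Integrable fun x => ψ x • planeWave ξ η x :=
  (h.smul (continuous_planeWave ξ η)).integrable_of_hasCompactSupport hc.smul_right

theorem fourierLaplace_add {ψ χ : 𝔼 → ℝ} (h : Continuous ψ) (hc : HasCompactSupport ψ)
    (h' : Continuous χ) (hc' : HasCompactSupport χ) (ξ η : 𝔼) :
    fourierLaplace (fun x => ψ x + χ x) ξ η = fourierLaplace ψ ξ η + fourierLaplace χ ξ η := by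
  unfold fourierLaplace
  rw [← integral_add (integrable_smul_planeWave h hc ξ η) (integrable_smul_planeWave h' hc' ξ η)]
  simp_rw [add_smul]

theorem fourierLaplace_const_mul (c : ℝ) (ψ : 𝔼 → ℝ) (ξ η : 𝔼) :
    fourierLaplace (fun x => c * ψ x) ξ η = c * fourierLaplace ψ ξ η := by
  unfold fourierLaplace
  simp_rw [mul_smul]
  rw [integral_smul]
  simp

theorem fourierLaplace_sum {ψ : Fin n → 𝔼 → ℝ} (h : ∀ i, Continuous (ψ i))
    (hc : ∀ i, HasCompactSupport (ψ i)) (ξ η : 𝔼) :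
    fourierLaplace (fun x => ∑ i, ψ i x) ξ η = ∑ i, fourierLaplace (ψ i) ξ η := by
  unfold fourierLaplace
  rw [← integral_finsetSum _ fun i _ => integrable_smul_planeWave (h i) (hc i) ξ η]
  simp_rw [Finset.sum_smul]

theorem fourierLaplace_fderiv {ψ : 𝔼 → ℝ} (h : ContDiff ℝ 1 ψ) (hc : HasCompactSupport ψ)
    (ξ η : 𝔼) (i : Fin n) :
    fourierLaplace (fun x => fderiv ℝ ψ x (EuclideanSpace.single i (1 : ℝ))) ξ η =
      -freq ξ η i * fourierLaplace ψ ξ η := by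
  have := integral_smul_fderiv_of_compact h hc (contDiff_planeWave ξ η)
    (EuclideanSpace.single i (1 : ℝ))
  simp_rw [fderiv_planeWave] at this
  unfold fourierLaplace
  rw [← neg_inj, ← this, ← integral_const_mul, ← integral_neg]
  congr 1 with x
  simp
  ring

theorem contDiff_coord (j : Fin n) {k : WithTop ℕ∞} : ContDiff ℝ k fun x : 𝔼 => x j :=
  (EuclideanSpace.proj j : 𝔼 →L[ℝ] ℝ).contDiff

theorem fderiv_coord_mul {ψ : 𝔼 → ℝ} (h : ContDiff ℝ 1 ψ) (i j : Fin n) (x : 𝔼) :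
    fderiv ℝ (fun x => x j * ψ x) x (EuclideanSpace.single i (1 : ℝ)) =
      (if i = j then 1 else 0) * ψ x +
        x j * fderiv ℝ ψ x (EuclideanSpace.single i (1 : ℝ)) := by
  have h1 : HasFDerivAt (fun x : 𝔼 => x j) (EuclideanSpace.proj j : 𝔼 →L[ℝ] ℝ) x :=
    (EuclideanSpace.proj j : 𝔼 →L[ℝ] ℝ).hasFDerivAt
  have h2 := h1.mul ((h.differentiable one_ne_zero) x).hasFDerivAt
  rw [show (fun x : 𝔼 => x j * ψ x) = (fun x : 𝔼 => x j) * ψ from rfl, h2.fderiv]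
  simp [eq_comm, add_comm, mul_comm]

theorem fourierLaplace_coord_mul_fderiv {ψ : 𝔼 → ℝ} (h : ContDiff ℝ 1 ψ)
    (hc : HasCompactSupport ψ) (ξ η : 𝔼) (i j : Fin n) :
    fourierLaplace (fun x => x j * fderiv ℝ ψ x (EuclideanSpace.single i (1 : ℝ))) ξ η =
      -freq ξ η i * fourierLaplace (fun x => x j * ψ x) ξ η -
        (if i = j then 1 else 0) * fourierLaplace ψ ξ η := by
  have h1 : ContDiff ℝ 1 fun x : 𝔼 => x j * ψ x := (contDiff_coord j).mul h
  rw [← fourierLaplace_fderiv h1 hc.mul_left]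
  simp_rw [fderiv_coord_mul h]
  rw [fourierLaplace_add (ψ := fun x => (if i = j then 1 else 0) * ψ x)
    (continuous_const.mul h.continuous) hc.mul_left ?_ ?_, fourierLaplace_const_mul]
  · split_ifs <;> simp
  · exact (contDiff_coord j (k := 1)).continuous.mul
      ((h.continuous_fderiv one_ne_zero).clm_apply continuous_const)
  · exact (hc.fderiv_apply (𝕜 := ℝ) _).mul_left

theorem hasDerivAt_fourierLaplace {a a' : 𝔼 → ℝ → ℝ} {R t : ℝ}
    (ha : ContinuousOn (fun p : 𝔼 × ℝ => a p.1 p.2) (univ ×ˢ Ici 0))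
    (ha' : ContinuousOn (fun p : 𝔼 × ℝ => a' p.1 p.2) (univ ×ˢ Ici 0))
    (hder : ∀ x s, 0 < s → HasDerivAt (a x) (a' x s) s)
    (hsupp : ∀ x s, 0 ≤ s → R + s < ‖x‖ → a x s = 0) (ht : 0 < t) (ξ η : 𝔼) :
    HasDerivAt (fun s => fourierLaplace (fun x => a x s) ξ η)
      (fourierLaplace (fun x => a' x t) ξ η) t := by
  have hp : Continuous fun p : 𝔼 × ℝ => planeWave ξ η p.1 :=
    (continuous_planeWave ξ η).comp continuous_fst
  refine hasDerivAt_integral_of_compact (F := fun x s => a x s • planeWave ξ η x)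
    (F' := fun x s => a' x s • planeWave ξ η x) (isCompact_closedBall (0 : 𝔼) (R + (t + 1)))
    (T := t + 1) (ha.smul hp.continuousOn) (ha'.smul hp.continuousOn) ?_ ?_ ⟨ht, by linarith⟩
  · exact fun x s hs => (hder x s hs).smul_const _
  · intro x hx s hs
    rw [mem_closedBall_zero_iff, not_le] at hx
    simp [hsupp x s hs.1 (by linarith [hs.2])]

theorem continuousOn_fourierLaplace {a : 𝔼 → ℝ → ℝ} {R : ℝ}
    (ha : ContinuousOn (fun p : 𝔼 × ℝ => a p.1 p.2) (univ ×ˢ Ici 0))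
    (hsupp : ∀ x s, 0 ≤ s → R + s < ‖x‖ → a x s = 0) (T : ℝ) (ξ η : 𝔼) :
    ContinuousOn (fun s => fourierLaplace (fun x => a x s) ξ η) (Icc 0 T) := by
  have hp : Continuous fun p : 𝔼 × ℝ => planeWave ξ η p.1 :=
    (continuous_planeWave ξ η).comp continuous_fst
  refine continuousOn_integral_Icc (F := fun x s => a x s • planeWave ξ η x)
    (isCompact_closedBall (0 : 𝔼) (R + T)) (ha.smul hp.continuousOn) ?_
  intro x hx s hs
  rw [mem_closedBall_zero_iff, not_le] at hx
  simp [hsupp x s hs.1 (by linarith [hs.2])]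

/-- `cosh (t s)`, the solution of `y'' = s² y`, `y(0) = 1`, `y'(0) = 0`. -/
def propC (s : ℂ) (t : ℝ) : ℂ := Complex.cosh (t * s)

/-- `sinh (t s) / s`, the solution of `y'' = s² y`, `y(0) = 0`, `y'(0) = 1`. -/
def propS (s : ℂ) (t : ℝ) : ℂ := if s = 0 then (t : ℂ) else Complex.sinh (t * s) / s

theorem hasDerivAt_propC (s : ℂ) (t : ℝ) : HasDerivAt (propC s) (s ^ 2 * propS s t) t := by
  have h1 : HasDerivAt (fun t : ℝ => (t : ℂ) * s) s t := by
    simpa using (hasDerivAt_id t).ofReal_comp.mul_const s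
  refine ((Complex.hasDerivAt_cosh _).comp t h1).congr_deriv ?_
  unfold propS
  split_ifs with h
  · simp [h]
  · field_simp

theorem hasDerivAt_propS (s : ℂ) (t : ℝ) : HasDerivAt (propS s) (propC s t) t := by
  unfold propS propC
  by_cases h : s = 0
  · simpa [h] using (hasDerivAt_id t).ofReal_comp
  · have h1 : HasDerivAt (fun t : ℝ => (t : ℂ) * s) s t := by
      simpa using (hasDerivAt_id t).ofReal_comp.mul_const s
    simp only [h, if_false]
    refine (((Complex.hasDerivAt_sinh _).comp t h1).div_const s).congr_deriv ?_
    field_simp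

theorem propC_sq_sub (s : ℂ) (t : ℝ) : propC s t ^ 2 - s ^ 2 * propS s t ^ 2 = 1 := by
  unfold propC propS
  split_ifs with h
  · simp [h]
  · rw [div_pow, mul_div_cancel₀ _ (pow_ne_zero 2 h)]
    exact Complex.cosh_sq_sub_sinh_sq _

theorem eq_of_hasDerivAt_zero {A : ℝ → ℂ} {t : ℝ} (ht : 0 ≤ t) (hc : ContinuousOn A (Icc 0 t))
    (h : ∀ s ∈ Ioo 0 t, HasDerivAt A 0 s) : A t = A 0 := by
  rcases ht.eq_or_lt with rfl | ht
  · rfl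
  have h1 : ∀ ε ∈ Ioo 0 t, A t = A ε := fun ε hε =>
    (constant_of_has_deriv_right_zero (hc.mono (Icc_subset_Icc_left hε.1.le))
      (fun x hx => (h x ⟨hε.1.trans_le hx.1, hx.2⟩).hasDerivWithinAt) t ⟨hε.2.le, le_rfl⟩)
  have h2 : Tendsto A (𝓝[Ioo 0 t] 0) (𝓝 (A 0)) :=
    (hc 0 ⟨le_rfl, ht.le⟩).mono_left (nhdsWithin_mono _ Ioo_subset_Icc_self)
  have h3 : Tendsto A (𝓝[Ioo 0 t] 0) (𝓝 (A t)) :=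
    tendsto_const_nhds.congr' (eventually_nhdsWithin_of_forall h1)
  have : (𝓝[Ioo 0 t] (0 : ℝ)).NeBot := by
    rw [nhdsWithin_Ioo_eq_nhdsGT ht]; infer_instance
  exact tendsto_nhds_unique h3 h2

/-- Uniqueness for `Y'' = s² Y`. -/
theorem eq_prop_of_ode {Y Y' : ℝ → ℂ} {s : ℂ} (hY : ∀ T, ContinuousOn Y (Icc 0 T))
    (hY' : ∀ T, ContinuousOn Y' (Icc 0 T)) (h1 : ∀ t, 0 < t → HasDerivAt Y (Y' t) t)
    (h2 : ∀ t, 0 < t → HasDerivAt Y' (s ^ 2 * Y t) t) {t : ℝ} (ht : 0 ≤ t) :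
    Y t = propC s t * Y 0 + propS s t * Y' 0 ∧
      Y' t = propC s t * Y' 0 + propS s t * (s ^ 2 * Y 0) := by
  have hC : Continuous (propC s) :=
    continuous_iff_continuousAt.2 fun t => (hasDerivAt_propC s t).continuousAt
  have hS : Continuous (propS s) :=
    continuous_iff_continuousAt.2 fun t => (hasDerivAt_propS s t).continuousAt
  have hA : propC s t * Y t - propS s t * Y' t = propC s 0 * Y 0 - propS s 0 * Y' 0 := by
    refine eq_of_hasDerivAt_zero (A := fun t => propC s t * Y t - propS s t * Y' t) ht
      ((hC.continuousOn.mul (hY t)).sub (hS.continuousOn.mul (hY' t))) fun r hr => ?_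
    exact (((hasDerivAt_propC s r).mul (h1 r hr.1)).sub
      ((hasDerivAt_propS s r).mul (h2 r hr.1))).congr_deriv (by ring)
  have hB : propC s t * Y' t - s ^ 2 * propS s t * Y t =
      propC s 0 * Y' 0 - s ^ 2 * propS s 0 * Y 0 := by
    refine eq_of_hasDerivAt_zero (A := fun t => propC s t * Y' t - s ^ 2 * propS s t * Y t) ht
      ((hC.continuousOn.mul (hY' t)).sub ((continuousOn_const.mul hS.continuousOn).mul (hY t)))
      fun r hr => ?_
    exact (((hasDerivAt_propC s r).mul (h2 r hr.1)).sub
      (((hasDerivAt_propS s r).const_mul (s ^ 2)).mul (h1 r hr.1))).congr_deriv (by ring)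
  have hC0 : propC s 0 = 1 := by simp [propC]
  have hS0 : propS s 0 = 0 := by simp [propS]
  rw [hC0, hS0] at hA hB
  have h := propC_sq_sub s t
  constructor
  · linear_combination propC s t * hA + propS s t * hB - Y t * h
  · linear_combination propC s t * hB + s ^ 2 * propS s t * hA - Y' t * h


/-- A square root of `1/4 + freqSq`. -/
def symb (ξ η : 𝔼) : ℂ := (1 / 4 + freqSq ξ η) ^ (1 / 2 : ℂ)

theorem symb_sq (ξ η : 𝔼) : symb ξ η ^ 2 = 1 / 4 + freqSq ξ η := by
  unfold symb
  rw [← Complex.cpow_nat_mul]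
  norm_num

/-- `a` solves, after the Fourier–Laplace transform, the undamped equation with the data
`A`, `B`, up to the factor `exp (t / 2)`. -/
def HasAmplitude (a : 𝔼 → ℝ → ℝ) (A B : 𝔼 → 𝔼 → ℂ) : Prop :=
  ∀ t, 0 < t → ∀ ξ η, Complex.exp ((t / 2 : ℝ) : ℂ) * fourierLaplace (fun x => a x t) ξ η =
    propC (symb ξ η) t * A ξ η + propS (symb ξ η) t * B ξ η

theorem hasDerivAt_exp_half_mul {y : ℝ → ℂ} {y' : ℂ} {t : ℝ} (h : HasDerivAt y y' t) :
    HasDerivAt (fun t : ℝ => Complex.exp ((t / 2 : ℝ) : ℂ) * y t)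
      (Complex.exp ((t / 2 : ℝ) : ℂ) * (y' + y t / 2)) t := by
  have h1 : HasDerivAt (fun t : ℝ => ((t / 2 : ℝ) : ℂ)) (1 / 2 : ℂ) t := by
    simpa using ((hasDerivAt_id t).div_const 2).ofReal_comp
  exact (h1.cexp.mul h).congr_deriv (by ring)

theorem continuousOn_exp_half_mul {y : ℝ → ℂ} {S : Set ℝ} (h : ContinuousOn y S) :
    ContinuousOn (fun t : ℝ => Complex.exp ((t / 2 : ℝ) : ℂ) * y t) S := by
  refine ContinuousOn.mul (Continuous.continuousOn ?_) h
  fun_prop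

namespace DampedWave

variable {f g : EuclideanSpace ℝ (Fin n) → ℝ} {u ut utt : EuclideanSpace ℝ (Fin n) → ℝ → ℝ}
  {ux utx : Fin n → EuclideanSpace ℝ (Fin n) → ℝ → ℝ} {R : ℝ}

theorem ut_eq_zero (W : DampedWave f g u ut utt ux utx) (hf : ∀ x, R < ‖x‖ → f x = 0)
    (hg : ∀ x, R < ‖x‖ → g x = 0) (x : 𝔼) (t : ℝ) (ht : 0 ≤ t) (hx : R + t < ‖x‖) :
    ut x t = 0 := by
  rcases ht.eq_or_lt with rfl | ht
  · rw [W.init_ut, hg x (by linarith)]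
  have h1 : (fun s => u x s) =ᶠ[𝓝 t] fun _ => 0 := by
    filter_upwards [Ioo_mem_nhds ht (show t < ‖x‖ - R by linarith)] with s hs
    exact W.eq_zero_of_norm_gt hf hg hs.1.le (by linarith [hs.2])
  exact (W.hasDerivAt_u x t ht).unique ((hasDerivAt_const t (0 : ℝ)).congr_of_eventuallyEq h1)

theorem ux_eq_zero (W : DampedWave f g u ut utt ux utx) (hf : ∀ x, R < ‖x‖ → f x = 0)
    (hg : ∀ x, R < ‖x‖ → g x = 0) (i : Fin n) (x : 𝔼) (t : ℝ) (ht : 0 ≤ t)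
    (hx : R + t < ‖x‖) : ux i x t = 0 := by
  have h1 : (fun z => u z t) =ᶠ[𝓝 x] fun _ => 0 := by
    filter_upwards [(isOpen_lt continuous_const continuous_norm).mem_nhds hx] with z hz
    exact W.eq_zero_of_norm_gt hf hg ht hz
  rw [← W.fderiv_u i x t ht, h1.fderiv_eq]
  simp

theorem hasCompactSupport_of_norm {a : 𝔼 → ℝ} {r : ℝ} (h : ∀ x, r < ‖x‖ → a x = 0) :
    HasCompactSupport a :=
  HasCompactSupport.of_support_subset_isCompact (isCompact_closedBall (0 : 𝔼) r) fun x hx => by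
    by_contra hx'
    rw [mem_closedBall_zero_iff, not_le] at hx'
    exact hx (h x hx')

theorem hasCompactSupport_sum {ι : Type*} [Fintype ι] {a : ι → 𝔼 → ℝ}
    (h : ∀ i, HasCompactSupport (a i)) : HasCompactSupport fun x => ∑ i, a i x := by
  refine HasCompactSupport.intro (isCompact_iUnion fun i => (h i)) fun x hx => ?_
  rw [mem_iUnion, not_exists] at hx
  exact Finset.sum_eq_zero fun i _ => image_eq_zero_of_notMem_tsupport (hx i)

theorem hasCompactSupport_u (W : DampedWave f g u ut utt ux utx) (hf : ∀ x, R < ‖x‖ → f x = 0)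
    (hg : ∀ x, R < ‖x‖ → g x = 0) {t : ℝ} (ht : 0 ≤ t) : HasCompactSupport fun x => u x t :=
  hasCompactSupport_of_norm fun _ hx => W.eq_zero_of_norm_gt hf hg ht hx

theorem hasCompactSupport_ut (W : DampedWave f g u ut utt ux utx) (hf : ∀ x, R < ‖x‖ → f x = 0)
    (hg : ∀ x, R < ‖x‖ → g x = 0) {t : ℝ} (ht : 0 ≤ t) : HasCompactSupport fun x => ut x t :=
  hasCompactSupport_of_norm fun x hx => W.ut_eq_zero hf hg x t ht hx

theorem hasCompactSupport_ux (W : DampedWave f g u ut utt ux utx) (hf : ∀ x, R < ‖x‖ → f x = 0)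
    (hg : ∀ x, R < ‖x‖ → g x = 0) (i : Fin n) {t : ℝ} (ht : 0 ≤ t) :
    HasCompactSupport fun x => ux i x t :=
  hasCompactSupport_of_norm fun x hx => W.ux_eq_zero hf hg i x t ht hx

theorem fourierLaplace_ux (W : DampedWave f g u ut utt ux utx) (hf : ∀ x, R < ‖x‖ → f x = 0)
    (hg : ∀ x, R < ‖x‖ → g x = 0) (i : Fin n) {t : ℝ} (ht : 0 ≤ t) (ξ η : 𝔼) :
    fourierLaplace (fun x => ux i x t) ξ η =
      -freq ξ η i * fourierLaplace (fun x => u x t) ξ η := by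
  rw [← fourierLaplace_fderiv ((W.contDiff_u t ht).of_le one_le_two)
    (W.hasCompactSupport_u hf hg ht)]
  simp_rw [W.fderiv_u i _ t ht]

theorem fourierLaplace_coord_mul_ux (W : DampedWave f g u ut utt ux utx)
    (hf : ∀ x, R < ‖x‖ → f x = 0) (hg : ∀ x, R < ‖x‖ → g x = 0) (i j : Fin n) {t : ℝ}
    (ht : 0 ≤ t) (ξ η : 𝔼) :
    fourierLaplace (fun x => x j * ux i x t) ξ η =
      -freq ξ η i * fourierLaplace (fun x => x j * u x t) ξ η -
        (if i = j then 1 else 0) * fourierLaplace (fun x => u x t) ξ η := by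
  rw [← fourierLaplace_coord_mul_fderiv ((W.contDiff_u t ht).of_le one_le_two)
    (W.hasCompactSupport_u hf hg ht)]
  simp_rw [W.fderiv_u i _ t ht]

theorem fourierLaplace_utt (W : DampedWave f g u ut utt ux utx) (hf : ∀ x, R < ‖x‖ → f x = 0)
    (hg : ∀ x, R < ‖x‖ → g x = 0) {t : ℝ} (ht : 0 < t) (ξ η : 𝔼) :
    fourierLaplace (fun x => utt x t) ξ η =
      freqSq ξ η * fourierLaplace (fun x => u x t) ξ η -
        fourierLaplace (fun x => ut x t) ξ η := by
  have e : (fun x => utt x t) = fun x => (∑ i, fderiv ℝ (fun z => ux i z t) x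
      (EuclideanSpace.single i (1 : ℝ))) + (-1) * ut x t := by
    funext x
    rw [W.pde x t ht]
    ring
  have h1 := fun i => W.contDiff_ux i t ht.le
  have h2 := fun i => W.hasCompactSupport_ux hf hg i ht.le
  have h3 : ∀ i, Continuous fun x => fderiv ℝ (fun z => ux i z t) x
      (EuclideanSpace.single i (1 : ℝ)) := fun i =>
    ((h1 i).continuous_fderiv one_ne_zero).clm_apply continuous_const
  have h4 : ∀ i, HasCompactSupport fun x => fderiv ℝ (fun z => ux i z t) x
      (EuclideanSpace.single i (1 : ℝ)) := fun i => (h2 i).fderiv_apply (𝕜 := ℝ) _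
  rw [e, fourierLaplace_add (ψ := fun x => ∑ i, fderiv ℝ (fun z => ux i z t) x
      (EuclideanSpace.single i (1 : ℝ))) (χ := fun x => (-1) * ut x t) (continuous_finsetSum _ fun i _ => h3 i)
    (hasCompactSupport_sum h4)
    (continuous_const.mul (W.contDiff_ut t ht.le).continuous)
    (W.hasCompactSupport_ut hf hg ht.le).mul_left, fourierLaplace_sum h3 h4,
    fourierLaplace_const_mul, freqSq, Finset.sum_mul]
  simp_rw [fourierLaplace_fderiv (h1 _) (h2 _), W.fourierLaplace_ux hf hg _ ht.le]
  push_cast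
  rw [sub_eq_add_neg, neg_one_mul]
  congr 1
  exact Finset.sum_congr rfl fun i _ => by ring

theorem fourierLaplace_coord_mul_utt (W : DampedWave f g u ut utt ux utx)
    (hf : ∀ x, R < ‖x‖ → f x = 0) (hg : ∀ x, R < ‖x‖ → g x = 0) (j : Fin n) {t : ℝ}
    (ht : 0 < t) (ξ η : 𝔼) :
    fourierLaplace (fun x => x j * utt x t) ξ η =
      freqSq ξ η * fourierLaplace (fun x => x j * u x t) ξ η +
        2 * freq ξ η j * fourierLaplace (fun x => u x t) ξ η -
        fourierLaplace (fun x => x j * ut x t) ξ η := by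
  have e : (fun x => x j * utt x t) = fun x => (∑ i, x j * fderiv ℝ (fun z => ux i z t) x
      (EuclideanSpace.single i (1 : ℝ))) + (-1) * (x j * ut x t) := by
    funext x
    rw [W.pde x t ht, ← Finset.mul_sum]
    ring
  have hj : Continuous fun x : 𝔼 => x j := (contDiff_coord j (k := 1)).continuous
  have h1 := fun i => W.contDiff_ux i t ht.le
  have h2 := fun i => W.hasCompactSupport_ux hf hg i ht.le
  have h3 : ∀ i, Continuous fun x : 𝔼 => x j * fderiv ℝ (fun z => ux i z t) x
      (EuclideanSpace.single i (1 : ℝ)) := fun i =>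
    hj.mul (((h1 i).continuous_fderiv one_ne_zero).clm_apply continuous_const)
  have h4 : ∀ i, HasCompactSupport fun x : 𝔼 => x j * fderiv ℝ (fun z => ux i z t) x
      (EuclideanSpace.single i (1 : ℝ)) := fun i => ((h2 i).fderiv_apply (𝕜 := ℝ) _).mul_left
  rw [e, fourierLaplace_add (ψ := fun x => ∑ i, x j * fderiv ℝ (fun z => ux i z t) x
      (EuclideanSpace.single i (1 : ℝ))) (χ := fun x => (-1) * (x j * ut x t)) (continuous_finsetSum _ fun i _ => h3 i)
    (hasCompactSupport_sum h4)
    (continuous_const.mul (hj.mul (W.contDiff_ut t ht.le).continuous))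
    (W.hasCompactSupport_ut hf hg ht.le).mul_left.mul_left, fourierLaplace_sum h3 h4,
    fourierLaplace_const_mul, freqSq, Finset.sum_mul]
  simp_rw [fourierLaplace_coord_mul_fderiv (h1 _) (h2 _), W.fourierLaplace_ux hf hg _ ht.le,
    W.fourierLaplace_coord_mul_ux hf hg _ j ht.le]
  push_cast
  rw [sub_eq_add_neg, neg_one_mul]
  congr 1
  have e2 : 2 * freq ξ η j * fourierLaplace (fun x => u x t) ξ η =
      ∑ i, if i = j then 2 * freq ξ η i * fourierLaplace (fun x => u x t) ξ η else 0 := by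
    simp
  rw [e2, ← Finset.sum_add_distrib]
  refine Finset.sum_congr rfl fun i _ => ?_
  split_ifs <;> ring

theorem hasAmplitude (W : DampedWave f g u ut utt ux utx) (hf : ∀ x, R < ‖x‖ → f x = 0)
    (hg : ∀ x, R < ‖x‖ → g x = 0) (hfc : Continuous f) (hgc : Continuous g) :
    HasAmplitude u (fourierLaplace f) (fourierLaplace fun x => g x + 1 / 2 * f x) ∧
    HasAmplitude (fun x t => ut x t + 1 / 2 * u x t) (fourierLaplace fun x => g x + 1 / 2 * f x)
      (fun ξ η => (1 / 4 + freqSq ξ η) * fourierLaplace f ξ η) ∧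
    ∀ j, HasAmplitude (fun x t => t * ux j x t + x j * (ut x t + 1 / 2 * u x t))
      (fourierLaplace fun x => x j * (g x + 1 / 2 * f x))
      (fun ξ η => freq ξ η j * fourierLaplace f ξ η +
        (1 / 4 + freqSq ξ η) * fourierLaplace (fun x => x j * f x) ξ η) := by
  have hfs := hasCompactSupport_of_norm hf
  have hgs := hasCompactSupport_of_norm hg
  have su : ∀ x s, 0 ≤ s → R + s < ‖x‖ → u x s = 0 := fun x s hs hx =>
    W.eq_zero_of_norm_gt hf hg hs hx
  have sut := W.ut_eq_zero hf hg
  have cu := fun (t : ℝ) (ht : 0 ≤ t) => (W.contDiff_u t ht).continuous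
  have cut := fun (t : ℝ) (ht : 0 ≤ t) => (W.contDiff_ut t ht).continuous
  have cux := fun (i : Fin n) (t : ℝ) (ht : 0 ≤ t) => (W.contDiff_ux i t ht).continuous
  have ku := fun (t : ℝ) (ht : 0 ≤ t) => W.hasCompactSupport_u hf hg ht
  have kut := fun (t : ℝ) (ht : 0 ≤ t) => W.hasCompactSupport_ut hf hg ht
  have kux := fun (i : Fin n) (t : ℝ) (ht : 0 ≤ t) => W.hasCompactSupport_ux hf hg i ht
  have u0 : (fun x => u x 0) = f := funext W.init_u
  have ut0 : (fun x => ut x 0) = g := funext W.init_ut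
  have key : ∀ ξ η t, 0 ≤ t →
      Complex.exp ((t / 2 : ℝ) : ℂ) * fourierLaplace (fun x => u x t) ξ η =
        propC (symb ξ η) t * fourierLaplace f ξ η +
          propS (symb ξ η) t * (fourierLaplace g ξ η + fourierLaplace f ξ η / 2) ∧
      Complex.exp ((t / 2 : ℝ) : ℂ) * (fourierLaplace (fun x => ut x t) ξ η +
          fourierLaplace (fun x => u x t) ξ η / 2) =
        propC (symb ξ η) t * (fourierLaplace g ξ η + fourierLaplace f ξ η / 2) +
          propS (symb ξ η) t * ((1 / 4 + freqSq ξ η) * fourierLaplace f ξ η) := by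
    intro ξ η t ht
    have d1 : ∀ t, 0 < t → HasDerivAt (fun s => fourierLaplace (fun x => u x s) ξ η)
        (fourierLaplace (fun x => ut x t) ξ η) t := fun t ht =>
      hasDerivAt_fourierLaplace W.cont_u W.cont_ut W.hasDerivAt_u su ht ξ η
    have d2 : ∀ t, 0 < t → HasDerivAt (fun s => fourierLaplace (fun x => ut x s) ξ η) _ t :=
      fun t ht => (hasDerivAt_fourierLaplace W.cont_ut W.cont_utt W.hasDerivAt_ut sut ht
        ξ η).congr_deriv (W.fourierLaplace_utt hf hg ht ξ η)
    have c1 := fun T => continuousOn_fourierLaplace W.cont_u su T ξ η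
    have c2 := fun T => continuousOn_fourierLaplace W.cont_ut sut T ξ η
    have := eq_prop_of_ode (s := symb ξ η)
      (Y := fun t => Complex.exp ((t / 2 : ℝ) : ℂ) * fourierLaplace (fun x => u x t) ξ η)
      (Y' := fun t => Complex.exp ((t / 2 : ℝ) : ℂ) * (fourierLaplace (fun x => ut x t) ξ η +
          fourierLaplace (fun x => u x t) ξ η / 2))
      (fun T => continuousOn_exp_half_mul (c1 T))
      (fun T => continuousOn_exp_half_mul ((c2 T).add ((c1 T).div_const 2)))
      (fun t ht => hasDerivAt_exp_half_mul (d1 t ht))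
      (fun t ht => (hasDerivAt_exp_half_mul ((d2 t ht).add
        ((d1 t ht).div_const 2))).congr_deriv (by rw [symb_sq]; simp only [Pi.add_apply]; ring)) ht
    simpa [u0, ut0, symb_sq] using this
  have hP : ∀ j : Fin n, Continuous fun x : 𝔼 => x j := fun j =>
    (contDiff_coord j (k := 1)).continuous
  have eP : ∀ ξ η, fourierLaplace (fun x => g x + 1 / 2 * f x) ξ η =
      fourierLaplace g ξ η + fourierLaplace f ξ η / 2 := by
    intro ξ η
    rw [fourierLaplace_add (χ := fun x => 1 / 2 * f x) hgc hgs (continuous_const.mul hfc) hfs.mul_left,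
      fourierLaplace_const_mul]
    push_cast
    ring
  refine ⟨fun t ht ξ η => ?_, fun t ht ξ η => ?_, fun j t ht ξ η => ?_⟩
  · rw [eP, (key ξ η t ht.le).1]
  · rw [eP, fourierLaplace_add (χ := fun x => 1 / 2 * u x t) (cut t ht.le)
      (kut t ht.le) (continuous_const.mul (cu t ht.le))
      (ku t ht.le).mul_left, fourierLaplace_const_mul, ← (key ξ η t ht.le).2]
    push_cast
    ring
  · have hj := hP j
    have hjc : Continuous fun p : 𝔼 × ℝ => p.1 j := hj.comp continuous_fst
    have d1 : ∀ t, 0 < t → HasDerivAt (fun s => fourierLaplace (fun x => u x s) ξ η)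
        (fourierLaplace (fun x => ut x t) ξ η) t := fun t ht =>
      hasDerivAt_fourierLaplace W.cont_u W.cont_ut W.hasDerivAt_u su ht ξ η
    have d2 : ∀ t, 0 < t → HasDerivAt (fun s => fourierLaplace (fun x => ut x s) ξ η) _ t :=
      fun t ht => (hasDerivAt_fourierLaplace W.cont_ut W.cont_utt W.hasDerivAt_ut sut ht
        ξ η).congr_deriv (W.fourierLaplace_utt hf hg ht ξ η)
    have c1 := fun T => continuousOn_fourierLaplace W.cont_u su T ξ η
    have c2 := fun T => continuousOn_fourierLaplace W.cont_ut sut T ξ η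
    have sv : ∀ (x : 𝔼) s, 0 ≤ s → R + s < ‖x‖ → x j * u x s = 0 := fun x s hs hx => by
      rw [su x s hs hx, mul_zero]
    have svt : ∀ (x : 𝔼) s, 0 ≤ s → R + s < ‖x‖ → x j * ut x s = 0 := fun x s hs hx => by
      rw [sut x s hs hx, mul_zero]
    have e1 : ∀ t, 0 < t → HasDerivAt (fun s => fourierLaplace (fun x => x j * u x s) ξ η)
        (fourierLaplace (fun x => x j * ut x t) ξ η) t := fun t ht =>
      hasDerivAt_fourierLaplace (a := fun x s => x j * u x s) (a' := fun x s => x j * ut x s)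
        (hjc.continuousOn.mul W.cont_u) (hjc.continuousOn.mul W.cont_ut)
        (fun x s hs => (W.hasDerivAt_u x s hs).const_mul _) sv ht ξ η
    have e2 : ∀ t, 0 < t → HasDerivAt (fun s => fourierLaplace (fun x => x j * ut x s) ξ η) _ t :=
      fun t ht => (hasDerivAt_fourierLaplace (a := fun x s => x j * ut x s)
        (a' := fun x s => x j * utt x s)
        (hjc.continuousOn.mul W.cont_ut) (hjc.continuousOn.mul W.cont_utt)
        (fun x s hs => (W.hasDerivAt_ut x s hs).const_mul _) svt ht
        ξ η).congr_deriv (W.fourierLaplace_coord_mul_utt hf hg j ht ξ η)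
    have k1 := fun T => continuousOn_fourierLaplace (a := fun x s => x j * u x s)
      (hjc.continuousOn.mul W.cont_u) sv T ξ η
    have k2 := fun T => continuousOn_fourierLaplace (a := fun x s => x j * ut x s)
      (hjc.continuousOn.mul W.cont_ut) svt T ξ η
    have ct : ∀ T, ContinuousOn (fun t : ℝ => (t : ℂ)) (Icc 0 T) := fun T =>
      Complex.continuous_ofReal.continuousOn
    have dt : ∀ t : ℝ, HasDerivAt (fun t : ℝ => (t : ℂ)) 1 t := fun t =>
      (hasDerivAt_id t).ofReal_comp
    have := (eq_prop_of_ode (s := symb ξ η)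
      (Y := fun t => Complex.exp ((t / 2 : ℝ) : ℂ) *
        (t * (-freq ξ η j * fourierLaplace (fun x => u x t) ξ η) +
          (fourierLaplace (fun x => x j * ut x t) ξ η +
            fourierLaplace (fun x => x j * u x t) ξ η / 2)))
      (Y' := fun t => Complex.exp ((t / 2 : ℝ) : ℂ) *
        (freq ξ η j * fourierLaplace (fun x => u x t) ξ η +
          (t * (-freq ξ η j * (fourierLaplace (fun x => ut x t) ξ η +
            fourierLaplace (fun x => u x t) ξ η / 2)) +
          (1 / 4 + freqSq ξ η) * fourierLaplace (fun x => x j * u x t) ξ η)))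
      (fun T => continuousOn_exp_half_mul (((ct T).mul (continuousOn_const.mul (c1 T))).add
        ((k2 T).add ((k1 T).div_const 2))))
      (fun T => continuousOn_exp_half_mul ((continuousOn_const.mul (c1 T)).add
        (((ct T).mul (continuousOn_const.mul ((c2 T).add ((c1 T).div_const 2)))).add
          (continuousOn_const.mul (k1 T)))))
      (fun t ht => (hasDerivAt_exp_half_mul (((dt t).fun_mul ((d1 t ht).const_mul _)).fun_add
        ((e2 t ht).fun_add ((e1 t ht).div_const 2)))).congr_deriv (by ring))
      (fun t ht => (hasDerivAt_exp_half_mul (((d1 t ht).const_mul _).fun_add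
        (((dt t).fun_mul (((d2 t ht).fun_add ((d1 t ht).div_const 2)).const_mul _)).fun_add
          ((e1 t ht).const_mul _)))).congr_deriv (by rw [symb_sq]; ring)) ht.le).1
    simp only [W.init_u, W.init_ut, zero_div, Complex.ofReal_zero, Complex.exp_zero,
      zero_mul, zero_add, one_mul] at this
    have e3 : (fun x : 𝔼 => t * ux j x t + x j * (ut x t + 1 / 2 * u x t)) =
        fun x => t * ux j x t + (x j * ut x t + 1 / 2 * (x j * u x t)) := by
      funext x; ring
    have e4 : (fun x : 𝔼 => x j * (g x + 1 / 2 * f x)) =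
        fun x => x j * g x + 1 / 2 * (x j * f x) := by
      funext x; ring
    rw [e3, e4, fourierLaplace_add (ψ := fun x => t * ux j x t)
      (continuous_const.mul (cux j t ht.le)) (kux j t ht.le).mul_left
      (χ := fun x => x j * ut x t + 1 / 2 * (x j * u x t))
      ((hj.mul (cut t ht.le)).add (continuous_const.mul (hj.mul (cu t ht.le))))
      ((kut t ht.le).mul_left.add (ku t ht.le).mul_left.mul_left), fourierLaplace_const_mul,
      fourierLaplace_add (ψ := fun x => x j * ut x t) (χ := fun x => 1 / 2 * (x j * u x t))
      (hj.mul (cut t ht.le)) (kut t ht.le).mul_left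
      (continuous_const.mul (hj.mul (cu t ht.le))) (ku t ht.le).mul_left.mul_left,
      fourierLaplace_const_mul, W.fourierLaplace_ux hf hg j ht.le,
      fourierLaplace_add (ψ := fun x => x j * g x) (χ := fun x => 1 / 2 * (x j * f x))
      (hj.mul hgc) hgs.mul_left (continuous_const.mul (hj.mul hfc)) hfs.mul_left.mul_left,
      fourierLaplace_const_mul]
    rw [show ((1 / 2 : ℝ) : ℂ) = 1 / 2 by push_cast; rfl, one_div_mul_eq_div, one_div_mul_eq_div]
    exact this

theorem _root_.HasAmplitude.fderiv_apply {a : 𝔼 → ℝ → ℝ} {A B : 𝔼 → 𝔼 → ℂ} (h : HasAmplitude a A B)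
    (ha : ∀ t, 0 < t → ContDiff ℝ 1 fun x => a x t)
    (hc : ∀ t, 0 < t → HasCompactSupport fun x => a x t) (k : Fin n) :
    HasAmplitude (fun x t => fderiv ℝ (fun z => a z t) x (EuclideanSpace.single k (1 : ℝ)))
      (fun ξ η => -freq ξ η k * A ξ η) (fun ξ η => -freq ξ η k * B ξ η) := by
  intro t ht ξ η
  rw [fourierLaplace_fderiv (ha t ht) (hc t ht)]
  linear_combination (-freq ξ η k) * h t ht ξ η

end DampedWave

theorem freqSq_re (ξ η : 𝔼) : (freqSq ξ η).re = ‖η‖ ^ 2 - ‖ξ‖ ^ 2 := by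
  rw [EuclideanSpace.real_norm_sq_eq, EuclideanSpace.real_norm_sq_eq, ← Finset.sum_sub_distrib,
    freqSq, Complex.re_sum]
  refine Finset.sum_congr rfl fun i _ => ?_
  simp [freq, pow_two, Complex.mul_re]

theorem freqSq_im (ξ η : 𝔼) : (freqSq ξ η).im = -2 * inner ℝ ξ η := by
  rw [PiLp.inner_apply, Finset.mul_sum, freqSq, Complex.im_sum]
  refine Finset.sum_congr rfl fun i _ => ?_
  simp [freq, pow_two, Complex.mul_im]
  ring

theorem norm_freq_le (ξ η : 𝔼) (i : Fin n) : ‖freq ξ η i‖ ≤ ‖η‖ + ‖ξ‖ := by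
  unfold freq
  refine (norm_sub_le _ _).trans (add_le_add ?_ ?_)
  · simpa using PiLp.norm_apply_le η i
  · simpa using PiLp.norm_apply_le ξ i

theorem norm_planeWave (ξ η x : 𝔼) : ‖planeWave ξ η x‖ = Real.exp (inner ℝ η x) := by
  simp [planeWave, Complex.norm_exp]

/-- Amplitudes which converge to `c` at the origin and decay rapidly in the real frequency,
uniformly for small imaginary frequencies. -/
def GoodAmplitude (A : 𝔼 → 𝔼 → ℂ) (c : ℂ) : Prop :=
  Tendsto (fun p : 𝔼 × 𝔼 => A p.1 p.2) (𝓝 0) (𝓝 c) ∧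
    ∀ N : ℕ, ∃ C, ∀ ξ η, ‖η‖ ≤ 1 / 4 → (1 + ‖ξ‖ ^ 2) ^ N * ‖A ξ η‖ ≤ C

theorem GoodAmplitude.add {A B : 𝔼 → 𝔼 → ℂ} {c d : ℂ} (hA : GoodAmplitude A c)
    (hB : GoodAmplitude B d) : GoodAmplitude (fun ξ η => A ξ η + B ξ η) (c + d) := by
  refine ⟨hA.1.add hB.1, fun N => ?_⟩
  obtain ⟨C, hC⟩ := hA.2 N
  obtain ⟨D, hD⟩ := hB.2 N
  refine ⟨C + D, fun ξ η h => ?_⟩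
  calc (1 + ‖ξ‖ ^ 2) ^ N * ‖A ξ η + B ξ η‖ ≤ (1 + ‖ξ‖ ^ 2) ^ N * (‖A ξ η‖ + ‖B ξ η‖) := by
        gcongr; exact norm_add_le _ _
    _ ≤ C + D := by linarith [hC ξ η h, hD ξ η h]

theorem GoodAmplitude.const_mul {A : 𝔼 → 𝔼 → ℂ} {c : ℂ} (hA : GoodAmplitude A c) (a : ℂ) :
    GoodAmplitude (fun ξ η => a * A ξ η) (a * c) := by
  refine ⟨hA.1.const_mul a, fun N => ?_⟩
  obtain ⟨C, hC⟩ := hA.2 N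
  refine ⟨‖a‖ * C, fun ξ η h => ?_⟩
  rw [norm_mul, mul_left_comm]
  exact mul_le_mul_of_nonneg_left (hC ξ η h) (norm_nonneg a)

theorem GoodAmplitude.zero : GoodAmplitude (fun _ _ : 𝔼 => (0 : ℂ)) 0 :=
  ⟨tendsto_const_nhds, fun _ => ⟨0, fun _ _ _ => by simp⟩⟩

theorem GoodAmplitude.sum {ι : Type*} (s : Finset ι) {A : ι → 𝔼 → 𝔼 → ℂ}
    (hA : ∀ i, GoodAmplitude (A i) 0) : GoodAmplitude (fun ξ η => ∑ i ∈ s, A i ξ η) 0 := by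
  classical
  induction s using Finset.induction_on with
  | empty => simpa using GoodAmplitude.zero
  | insert i s hi ih => simpa [Finset.sum_insert hi] using (hA i).add ih

theorem tendsto_freq (i : Fin n) :
    Tendsto (fun p : 𝔼 × 𝔼 => freq p.1 p.2 i) (𝓝 0) (𝓝 0) := by
  refine squeeze_zero_norm (fun p => norm_freq_le p.1 p.2 i) ?_
  have : Continuous fun p : 𝔼 × 𝔼 => ‖p.2‖ + ‖p.1‖ := by fun_prop
  simpa using this.tendsto 0

theorem GoodAmplitude.freq_mul {A : 𝔼 → 𝔼 → ℂ} {c : ℂ} (hA : GoodAmplitude A c) (i : Fin n) :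
    GoodAmplitude (fun ξ η => freq ξ η i * A ξ η) 0 := by
  refine ⟨by simpa using (tendsto_freq i).mul hA.1, fun N => ?_⟩
  obtain ⟨C, hC⟩ := hA.2 (N + 1)
  refine ⟨C, fun ξ η h => le_trans ?_ (hC ξ η h)⟩
  rw [norm_mul, ← mul_assoc, pow_succ]
  have h1 : ‖freq ξ η i‖ ≤ 1 + ‖ξ‖ ^ 2 := by
    nlinarith [norm_freq_le ξ η i, sq_nonneg (‖ξ‖ - 1 / 2)]
  have h2 := mul_le_mul_of_nonneg_left h1 (show 0 ≤ (1 + ‖ξ‖ ^ 2) ^ N by positivity)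
  exact mul_le_mul_of_nonneg_right h2 (norm_nonneg _)

theorem GoodAmplitude.freqSq_mul {A : 𝔼 → 𝔼 → ℂ} {c : ℂ} (hA : GoodAmplitude A c) :
    GoodAmplitude (fun ξ η => freqSq ξ η * A ξ η) 0 := by
  have : (fun ξ η => freqSq ξ η * A ξ η) =
      fun ξ η => ∑ i, freq ξ η i * (freq ξ η i * A ξ η) := by
    funext ξ η
    rw [freqSq, Finset.sum_mul]
    exact Finset.sum_congr rfl fun i _ => by ring
  rw [this]
  exact GoodAmplitude.sum _ fun i => (hA.freq_mul i).freq_mul i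

theorem tendsto_fourierLaplace {ψ : 𝔼 → ℝ} (h : Continuous ψ) (hc : HasCompactSupport ψ) :
    Tendsto (fun p : 𝔼 × 𝔼 => fourierLaplace ψ p.1 p.2) (𝓝 0) (𝓝 ((∫ x, ψ x : ℝ) : ℂ)) := by
  have h1 : Continuous fun p : 𝔼 × 𝔼 => fourierLaplace ψ p.1 p.2 := by
    have : Continuous fun q : (𝔼 × 𝔼) × 𝔼 => ψ q.2 • planeWave q.1.1 q.1.2 q.2 := by
      unfold planeWave
      fun_prop
    have h2 := continuous_parametric_integral_of_continuous
      (f := fun (p : 𝔼 × 𝔼) x => ψ x • planeWave p.1 p.2 x) (μ := volume) this hc.isCompact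
    refine h2.congr fun p => setIntegral_eq_integral_of_forall_compl_eq_zero fun x hx => ?_
    rw [image_eq_zero_of_notMem_tsupport hx, zero_smul]
  convert h1.tendsto 0 using 2
  simp [fourierLaplace, planeWave, integral_complex_ofReal]

theorem norm_fourierLaplace_le {ψ : 𝔼 → ℝ} (h : Continuous ψ) (hc : HasCompactSupport ψ)
    {ξ η : 𝔼} (hη : ‖η‖ ≤ 1) : ‖fourierLaplace ψ ξ η‖ ≤ ∫ x, |ψ x| * Real.exp ‖x‖ := by
  refine norm_integral_le_of_norm_le ?_ (Eventually.of_forall fun x => ?_)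
  · have : Continuous fun x => |ψ x| * Real.exp ‖x‖ := by fun_prop
    exact this.integrable_of_hasCompactSupport hc.abs.mul_right
  · rw [norm_smul, norm_planeWave, Real.norm_eq_abs]
    gcongr
    calc inner ℝ η x ≤ ‖η‖ * ‖x‖ := real_inner_le_norm _ _
      _ ≤ 1 * ‖x‖ := by gcongr
      _ = ‖x‖ := one_mul _

theorem fourierLaplace_decay (N : ℕ) : ∀ {ψ : 𝔼 → ℝ}, ContDiff ℝ (⊤ : ℕ∞) ψ →
    HasCompactSupport ψ →
    ∃ C, ∀ ξ η, ‖η‖ ≤ 1 / 4 → (1 + ‖ξ‖ ^ 2) ^ N * ‖fourierLaplace ψ ξ η‖ ≤ C := by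
  induction N with
  | zero =>
    intro ψ h hc
    refine ⟨∫ x, |ψ x| * Real.exp ‖x‖, fun ξ η hη => ?_⟩
    rw [pow_zero, one_mul]
    exact norm_fourierLaplace_le h.continuous hc (hη.trans (by norm_num))
  | succ N ih =>
    intro ψ h hc
    set D : (𝔼 → ℝ) → Fin n → 𝔼 → ℝ := fun χ i x =>
      fderiv ℝ χ x (EuclideanSpace.single i (1 : ℝ)) with hD
    have h1 : ∀ {χ : 𝔼 → ℝ}, ContDiff ℝ (⊤ : ℕ∞) χ → ∀ i, ContDiff ℝ (⊤ : ℕ∞) (D χ i) :=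
      fun hχ i => (hχ.fderiv_right (m := (⊤ : ℕ∞)) le_rfl).clm_apply contDiff_const
    have h2 : ∀ {χ : 𝔼 → ℝ}, HasCompactSupport χ → ∀ i, HasCompactSupport (D χ i) :=
      fun hχ i => hχ.fderiv_apply (𝕜 := ℝ) _
    have h3 : ∀ {χ : 𝔼 → ℝ}, ContDiff ℝ (⊤ : ℕ∞) χ → ContDiff ℝ 1 χ := fun h => h.of_le (by simp)
    set χ : 𝔼 → ℝ := fun x => ψ x + (-1) * ∑ i, D (D ψ i) i x with hχ
    have cs : ContDiff ℝ (⊤ : ℕ∞) fun x => ∑ i, D (D ψ i) i x :=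
      ContDiff.sum fun i _ => h1 (h1 h i) i
    have ks : HasCompactSupport fun x => ∑ i, D (D ψ i) i x :=
      DampedWave.hasCompactSupport_sum fun i => h2 (h2 hc i) i
    obtain ⟨C, hC⟩ := ih (ψ := χ) (h.add (contDiff_const.mul cs)) (hc.add ks.mul_left)
    refine ⟨2 * C, fun ξ η hη => ?_⟩
    have e : fourierLaplace χ ξ η = (1 - freqSq ξ η) * fourierLaplace ψ ξ η := by
      rw [hχ, fourierLaplace_add (χ := fun x => (-1) * ∑ i, D (D ψ i) i x) h.continuous hc
        (continuous_const.mul cs.continuous) ks.mul_left, fourierLaplace_const_mul,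
        fourierLaplace_sum (fun i => (h1 (h1 h i) i).continuous) fun i => h2 (h2 hc i) i]
      have e1 : ∀ i, fourierLaplace (D (D ψ i) i) ξ η =
          -freq ξ η i * (-freq ξ η i * fourierLaplace ψ ξ η) := fun i => by
        rw [← fourierLaplace_fderiv (h3 h) hc, ← fourierLaplace_fderiv (h3 (h1 h i)) (h2 hc i)]
      simp_rw [e1]
      rw [freqSq, sub_mul, Finset.sum_mul, sub_eq_add_neg, one_mul]
      push_cast
      rw [neg_one_mul]
      congr 2
      exact Finset.sum_congr rfl fun i _ => by ring
    have h4 : 1 + ‖ξ‖ ^ 2 ≤ 2 * ‖1 - freqSq ξ η‖ := by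
      have := Complex.re_le_norm (1 - freqSq ξ η)
      rw [Complex.sub_re, freqSq_re, Complex.one_re] at this
      nlinarith [norm_nonneg η, sq_nonneg ‖ξ‖]
    calc (1 + ‖ξ‖ ^ 2) ^ (N + 1) * ‖fourierLaplace ψ ξ η‖
        = (1 + ‖ξ‖ ^ 2) ^ N * ((1 + ‖ξ‖ ^ 2) * ‖fourierLaplace ψ ξ η‖) := by ring
      _ ≤ (1 + ‖ξ‖ ^ 2) ^ N * (2 * ‖1 - freqSq ξ η‖ * ‖fourierLaplace ψ ξ η‖) := by gcongr
      _ = 2 * ((1 + ‖ξ‖ ^ 2) ^ N * ‖fourierLaplace χ ξ η‖) := by rw [e, norm_mul]; ring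
      _ ≤ 2 * C := by linarith [hC ξ η hη]

theorem goodAmplitude_fourierLaplace {ψ : 𝔼 → ℝ} (h : ContDiff ℝ (⊤ : ℕ∞) ψ)
    (hc : HasCompactSupport ψ) : GoodAmplitude (fourierLaplace ψ) ((∫ x, ψ x : ℝ) : ℂ) :=
  ⟨tendsto_fourierLaplace h.continuous hc, fun N => fourierLaplace_decay N h hc⟩

/-- The rate `√(1/4 + |η|²)`. -/
def rate (η : 𝔼) : ℝ := √(1 / 4 + ‖η‖ ^ 2)

theorem rate_sq (η : 𝔼) : rate η ^ 2 = 1 / 4 + ‖η‖ ^ 2 := Real.sq_sqrt (by positivity)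

theorem half_le_rate (η : 𝔼) : 1 / 2 ≤ rate η :=
  Real.le_sqrt_of_sq_le (by nlinarith [sq_nonneg ‖η‖])

theorem rate_pos (η : 𝔼) : 0 < rate η := lt_of_lt_of_le (by norm_num) (half_le_rate η)

theorem rate_le_one {η : 𝔼} (h : ‖η‖ ≤ 1 / 4) : rate η ≤ 1 := by
  refine Real.sqrt_le_one.2 ?_
  nlinarith [norm_nonneg η]

theorem continuous_rate : Continuous (rate : 𝔼 → ℝ) := by
  unfold rate
  fun_prop

theorem symb_re_sq_sub (ξ η : 𝔼) :
    (symb ξ η).re ^ 2 - (symb ξ η).im ^ 2 = rate η ^ 2 - ‖ξ‖ ^ 2 := by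
  have h := congrArg Complex.re (symb_sq ξ η)
  rw [rate_sq]
  rw [Complex.add_re, freqSq_re, pow_two, Complex.mul_re] at h
  norm_num at h
  linarith

theorem symb_re_mul_im (ξ η : 𝔼) : (symb ξ η).re * (symb ξ η).im = -inner ℝ ξ η := by
  have h := congrArg Complex.im (symb_sq ξ η)
  rw [Complex.add_im, freqSq_im, pow_two, Complex.mul_im] at h
  norm_num at h
  linarith

/-- The gain in the exponential rate at frequency `ξ`. -/
def gain (ξ : 𝔼) : ℝ := min (‖ξ‖ ^ 2 / 4) (1 / 8)

theorem gain_nonneg (ξ : 𝔼) : 0 ≤ gain ξ := le_min (by positivity) (by norm_num)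

theorem abs_symb_re_le (ξ : 𝔼) {η : 𝔼} (h : ‖η‖ ≤ 1 / 4) :
    |(symb ξ η).re| ≤ rate η - gain ξ / 2 := by
  have h1 := symb_re_sq_sub ξ η
  have h2 := symb_re_mul_im ξ η
  have h3 : (symb ξ η).re ^ 2 * (symb ξ η).im ^ 2 ≤ ‖ξ‖ ^ 2 * ‖η‖ ^ 2 := by
    rw [← mul_pow, h2, neg_sq, ← mul_pow, ← sq_abs]
    exact pow_le_pow_left₀ (abs_nonneg _) (abs_real_inner_le_norm ξ η) 2
  have hr := rate_sq η
  have m0 := gain_nonneg ξ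
  have m1 : gain ξ ≤ ‖ξ‖ ^ 2 / 4 := min_le_left _ _
  have m2 : gain ξ ≤ 1 / 8 := min_le_right _ _
  have hY : ‖η‖ ^ 2 ≤ 1 / 16 := by nlinarith [norm_nonneg η]
  have hX : 0 ≤ ‖ξ‖ ^ 2 := by positivity
  have hY0 : 0 ≤ ‖η‖ ^ 2 := by positivity
  have key : (symb ξ η).re ^ 2 ≤ rate η ^ 2 - gain ξ := by
    by_contra! hlt
    generalize (symb ξ η).re ^ 2 = a at *
    generalize (symb ξ η).im ^ 2 = b at *
    generalize ‖ξ‖ ^ 2 = X at *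
    generalize ‖η‖ ^ 2 = Y at *
    have ha : 1 / 8 + Y < a := by linarith
    have hb : 3 / 4 * X < b := by linarith
    have hab : (1 / 8 + Y) * (3 / 4 * X) < a * b :=
      mul_lt_mul'' ha hb (by linarith) (by linarith)
    nlinarith
  have h5 := rate_le_one h
  have h6 := half_le_rate η
  refine abs_le_of_sq_le_sq (key.trans ?_) (by linarith)
  nlinarith

theorem norm_propC_le (s : ℂ) {t : ℝ} (ht : 0 ≤ t) : ‖propC s t‖ ≤ Real.exp (t * |s.re|) := by
  have h1 : ‖Complex.exp (t * s)‖ ≤ Real.exp (t * |s.re|) := by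
    rw [Complex.norm_exp]
    simp only [Complex.mul_re, Complex.ofReal_re, Complex.ofReal_im, zero_mul, sub_zero]
    gcongr
    exact le_abs_self _
  have h2 : ‖Complex.exp (-(t * s))‖ ≤ Real.exp (t * |s.re|) := by
    rw [Complex.norm_exp]
    simp only [Complex.neg_re, Complex.mul_re, Complex.ofReal_re, Complex.ofReal_im, zero_mul,
      sub_zero]
    rw [← mul_neg]
    gcongr
    exact neg_le_abs _
  rw [propC, Complex.cosh, norm_div, Complex.norm_ofNat]
  linarith [norm_add_le (Complex.exp (t * s)) (Complex.exp (-(t * s)))]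

theorem norm_propS_le (s : ℂ) {t : ℝ} (ht : 0 ≤ t) :
    ‖propS s t‖ ≤ t * Real.exp (t * |s.re|) := by
  have := norm_image_sub_le_of_norm_deriv_le_segment' (f := propS s) (f' := propC s) (a := 0)
    (b := t) (C := Real.exp (t * |s.re|)) (fun r _ => (hasDerivAt_propS s r).hasDerivWithinAt)
    (fun r hr => (norm_propC_le s hr.1).trans (by gcongr; exact hr.2.le)) t ⟨ht, le_rfl⟩
  rw [show propS s 0 = 0 by simp [propS]] at this
  simpa [mul_comm] using this

theorem norm_propS_le_div {s : ℂ} (hs : s ≠ 0) {t : ℝ} (ht : 0 ≤ t) :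
    ‖propS s t‖ ≤ Real.exp (t * |s.re|) / ‖s‖ := by
  have h1 : ‖Complex.exp (t * s)‖ ≤ Real.exp (t * |s.re|) := by
    rw [Complex.norm_exp]
    simp only [Complex.mul_re, Complex.ofReal_re, Complex.ofReal_im, zero_mul, sub_zero]
    gcongr
    exact le_abs_self _
  have h2 : ‖Complex.exp (-(t * s))‖ ≤ Real.exp (t * |s.re|) := by
    rw [Complex.norm_exp]
    simp only [Complex.neg_re, Complex.mul_re, Complex.ofReal_re, Complex.ofReal_im, zero_mul,
      sub_zero]
    rw [← mul_neg]
    gcongr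
    exact neg_le_abs _
  rw [propS, if_neg hs, norm_div]
  gcongr
  rw [Complex.sinh, norm_div, Complex.norm_ofNat]
  linarith [norm_sub_le (Complex.exp (t * s)) (Complex.exp (-(t * s)))]

theorem norm_propC_symb_le (ξ : 𝔼) {η : 𝔼} (h : ‖η‖ ≤ 1 / 4) {t : ℝ} (ht : 0 ≤ t) :
    ‖propC (symb ξ η) t‖ ≤ Real.exp (t * rate η) * Real.exp (-(t * gain ξ / 2)) := by
  refine (norm_propC_le _ ht).trans ?_
  rw [← Real.exp_add]
  gcongr
  nlinarith [mul_le_mul_of_nonneg_left (abs_symb_re_le ξ h) ht]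

theorem norm_propS_symb_le (ξ : 𝔼) {η : 𝔼} (h : ‖η‖ ≤ 1 / 4) {t : ℝ} (ht : 0 ≤ t) :
    ‖propS (symb ξ η) t‖ ≤ 8 * (Real.exp (t * rate η) * Real.exp (-(t * gain ξ / 2))) := by
  have h1 := mul_le_mul_of_nonneg_left (abs_symb_re_le ξ h) ht
  rw [← Real.exp_add]
  rcases le_or_gt (1 / 4) ‖symb ξ η‖ with hs | hs
  · have hs0 : symb ξ η ≠ 0 := by
      rintro h0
      rw [h0, norm_zero] at hs
      norm_num at hs
    refine (norm_propS_le_div hs0 ht).trans ?_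
    rw [div_le_iff₀ (by linarith)]
    have h2 : Real.exp (t * |(symb ξ η).re|) ≤ Real.exp (t * rate η + -(t * gain ξ / 2)) := by
      gcongr
      linarith
    nlinarith [Real.exp_pos (t * rate η + -(t * gain ξ / 2))]
  · refine (norm_propS_le _ ht).trans ?_
    have h2 : |(symb ξ η).re| ≤ 1 / 4 := (Complex.abs_re_le_norm _).trans hs.le
    have h3 : t ≤ 8 * Real.exp (t / 8) := by linarith [Real.add_one_le_exp (t / 8)]
    calc t * Real.exp (t * |(symb ξ η).re|) ≤ 8 * Real.exp (t / 8) * Real.exp (t * (1 / 4)) := by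
          gcongr
      _ = 8 * Real.exp (t / 8 + t * (1 / 4)) := by rw [mul_assoc, Real.exp_add]
      _ ≤ 8 * Real.exp (t * rate η + -(t * gain ξ / 2)) := by
          have m2 : gain ξ ≤ 1 / 8 := min_le_right _ _
          refine mul_le_mul_of_nonneg_left (Real.exp_le_exp.2 ?_) (by norm_num)
          nlinarith [half_le_rate η, mul_le_mul_of_nonneg_left m2 ht,
            mul_le_mul_of_nonneg_left (half_le_rate η) ht]

theorem one_add_pow_mul_exp_le (N : ℕ) {y : ℝ} (hy : 0 ≤ y) :
    (1 + y) ^ N * Real.exp (-(y / 16)) ≤ (16 * N) ^ N := by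
  rcases N.eq_zero_or_pos with rfl | hN
  · simp only [pow_zero, one_mul, Real.exp_le_one_iff]
    linarith
  have hN' : (1 : ℝ) ≤ N := by exact_mod_cast hN
  have h1 : 1 + y ≤ 16 * N * Real.exp (y / (16 * N)) := by
    have := Real.add_one_le_exp (y / (16 * N))
    calc 1 + y ≤ 16 * N * (y / (16 * N) + 1) := by
          rw [mul_add, mul_div_cancel₀ _ (by positivity)]
          linarith
      _ ≤ _ := by gcongr
  calc (1 + y) ^ N * Real.exp (-(y / 16))
      ≤ (16 * N * Real.exp (y / (16 * N))) ^ N * Real.exp (-(y / 16)) := by gcongr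
    _ = (16 * N) ^ N := by
        rw [mul_pow, ← Real.exp_nat_mul, mul_assoc, ← Real.exp_add]
        rw [show N * (y / (16 * N)) + -(y / 16) = 0 by field_simp; ring, Real.exp_zero, mul_one]

theorem exp_gain_le (N : ℕ) (θ : 𝔼) {t : ℝ} (ht : 1 ≤ t) :
    (1 + ‖θ‖ ^ 2) ^ N * Real.exp (-(t * gain ((√t)⁻¹ • θ) / 2)) ≤
      (16 * N) ^ N * (1 + ‖(√t)⁻¹ • θ‖ ^ 2) ^ N := by
  have hn : ‖(√t)⁻¹ • θ‖ ^ 2 = ‖θ‖ ^ 2 / t := by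
    rw [norm_smul, mul_pow, norm_inv, Real.norm_of_nonneg (Real.sqrt_nonneg t), inv_pow,
      Real.sq_sqrt (by linarith)]
    ring
  rw [gain, hn]
  have hΘ : 0 ≤ ‖θ‖ ^ 2 := by positivity
  generalize ‖θ‖ ^ 2 = Θ at *
  have ht0 : 0 < t := by linarith
  have h1 : 1 ≤ (1 + Θ / t) ^ N := one_le_pow₀ (by linarith [div_nonneg hΘ ht0.le])
  rcases min_cases (Θ / t / 4) (1 / 8 : ℝ) with ⟨h, -⟩ | ⟨h, -⟩ <;> rw [h]
  · calc (1 + Θ) ^ N * Real.exp (-(t * (Θ / t / 4) / 2))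
        ≤ (1 + Θ) ^ N * Real.exp (-(Θ / 16)) := by
          refine mul_le_mul_of_nonneg_left (Real.exp_le_exp.2 ?_) (by positivity)
          rw [show t * (Θ / t / 4) / 2 = Θ / 8 by field_simp; ring]
          linarith
      _ ≤ (16 * N) ^ N * 1 := by rw [mul_one]; exact one_add_pow_mul_exp_le N hΘ
      _ ≤ _ := by gcongr
  · have h2 : 1 + Θ ≤ (1 + t) * (1 + Θ / t) := by
      have : (1 + t) * (1 + Θ / t) = 1 + Θ + t + Θ / t := by field_simp; ring
      linarith [div_nonneg hΘ ht0.le]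
    calc (1 + Θ) ^ N * Real.exp (-(t * (1 / 8) / 2))
        ≤ ((1 + t) * (1 + Θ / t)) ^ N * Real.exp (-(t / 16)) := by
          refine mul_le_mul (pow_le_pow_left₀ (by positivity) h2 N) (Real.exp_le_exp.2 ?_)
            (by positivity) (by positivity)
          linarith
      _ = (1 + t) ^ N * Real.exp (-(t / 16)) * (1 + Θ / t) ^ N := by rw [mul_pow]; ring
      _ ≤ _ := by
          gcongr
          exact one_add_pow_mul_exp_le N ht0.le

theorem tendsto_symb : Tendsto (fun p : 𝔼 × 𝔼 => symb p.1 p.2) (𝓝 0) (𝓝 (1 / 2)) := by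
  have h1 : Tendsto (fun p : 𝔼 × 𝔼 => 1 / 4 + freqSq p.1 p.2) (𝓝 0) (𝓝 (1 / 4)) := by
    have h2 : Tendsto (fun p : 𝔼 × 𝔼 => ∑ i, freq p.1 p.2 i ^ 2) (𝓝 0)
        (𝓝 (∑ _i : Fin n, (0 : ℂ) ^ 2)) :=
      tendsto_finsetSum _ fun i _ => (tendsto_freq i).pow 2
    convert h2.const_add (1 / 4) using 2
    · simp [freqSq]
    · simp
  have h3 : ((1 : ℂ) / 4) ^ (1 / 2 : ℂ) = 1 / 2 := by
    rw [show ((1 : ℂ) / 4) = (1 / 2) ^ 2 by norm_num, ← Complex.cpow_nat_mul']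
    · norm_num
    all_goals
      rw [show (1 / 2 : ℂ) = ((1 / 2 : ℝ) : ℂ) by norm_num,
        Complex.arg_ofReal_of_nonneg (by norm_num)]
      simp [Real.pi_pos, Real.pi_pos.le]
  rw [← h3]
  exact (continuousAt_cpow_const (by left; norm_num)).tendsto.comp h1

/-- The phase identity behind the stationary-phase computation. -/
theorem phase_identity {s s₀ r w Q : ℂ} (hr : r ≠ 0) (hs₀ : s₀ ≠ 0) (hs : s + s₀ ≠ 0)
    (h : s ^ 2 = s₀ ^ 2 - Q * r ^ 2 - 2 * Complex.I * (r * w)) :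
    r⁻¹ * w / s₀ * Complex.I - s₀ / r ^ 2 + s / r ^ 2 =
      -Q / (s + s₀) + Complex.I * w * (-Q * r - 2 * Complex.I * w) / (s₀ * (s + s₀) ^ 2) := by
  have hQ : Q = (s₀ ^ 2 - s ^ 2 - 2 * Complex.I * (r * w)) / r ^ 2 := by
    rw [h]
    field_simp
    ring
  rw [hQ]
  field_simp
  ring

/-- The integrand of the rescaled inversion formula. -/
def kernelInt (A B : 𝔼 → 𝔼 → ℂ) (q : ℝ × 𝔼) (θ : 𝔼) : ℂ :=
  Complex.exp (((√q.1)⁻¹⁻¹ * inner ℝ θ q.2 / rate q.2 : ℂ) * Complex.I - q.1 * rate q.2) *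
    (propC (symb ((√q.1)⁻¹ • θ) q.2) q.1 * A ((√q.1)⁻¹ • θ) q.2 +
      propS (symb ((√q.1)⁻¹ • θ) q.2) q.1 * B ((√q.1)⁻¹ • θ) q.2)

theorem tendsto_kernelInt {A B : 𝔼 → 𝔼 → ℂ} {α β : ℂ} (hA : GoodAmplitude A α)
    (hB : GoodAmplitude B β) (θ : 𝔼) :
    Tendsto (fun q => kernelInt A B q θ) (atTop ×ˢ 𝓝 0)
      (𝓝 (Complex.exp (-‖θ‖ ^ 2) * (α / 2 + β))) := by
  set L : Filter (ℝ × 𝔼) := atTop ×ˢ 𝓝 0 with hL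
  have t1 : Tendsto (fun q : ℝ × 𝔼 => q.1) L atTop := tendsto_fst
  have t2 : Tendsto (fun q : ℝ × 𝔼 => q.2) L (𝓝 0) := tendsto_snd
  have tr : Tendsto (fun q : ℝ × 𝔼 => (√q.1)⁻¹) L (𝓝 0) :=
    tendsto_inv_atTop_zero.comp (Real.tendsto_sqrt_atTop.comp t1)
  have trc : Tendsto (fun q : ℝ × 𝔼 => (((√q.1)⁻¹ : ℝ) : ℂ)) L (𝓝 0) := by
    simpa [Function.comp_def] using (Complex.continuous_ofReal.tendsto 0).comp tr
  have tξ : Tendsto (fun q : ℝ × 𝔼 => (√q.1)⁻¹ • θ) L (𝓝 0) := by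
    simpa using tr.smul_const θ
  have tp : Tendsto (fun q : ℝ × 𝔼 => ((√q.1)⁻¹ • θ, q.2)) L (𝓝 0) := tξ.prodMk_nhds t2
  have ts := tendsto_symb.comp tp
  have tA := hA.1.comp tp
  have tB := hB.1.comp tp
  have tw : Tendsto (fun q : ℝ × 𝔼 => ((inner ℝ θ q.2 : ℝ) : ℂ)) L (𝓝 0) := by
    have : Continuous fun x : 𝔼 => ((inner ℝ θ x : ℝ) : ℂ) := by fun_prop
    simpa [Function.comp_def] using (this.tendsto 0).comp t2
  have t0 : Tendsto (fun q : ℝ × 𝔼 => ((rate q.2 : ℝ) : ℂ)) L (𝓝 (1 / 2)) := by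
    have h := ((Complex.continuous_ofReal.comp continuous_rate).tendsto (0 : 𝔼)).comp t2
    have e : rate (0 : 𝔼) = 1 / 2 := by
      rw [rate, show (1 / 4 + ‖(0 : 𝔼)‖ ^ 2) = (1 / 2) ^ 2 by norm_num,
        Real.sqrt_sq (by norm_num)]
    simpa [e, Function.comp_def] using h
  simp only [Function.comp_def] at ts tA tB
  have tE : Tendsto (fun q : ℝ × 𝔼 => -(‖θ‖ ^ 2 : ℂ) / (symb ((√q.1)⁻¹ • θ) q.2 + rate q.2) +
      Complex.I * (inner ℝ θ q.2 : ℝ) * (-(‖θ‖ ^ 2 : ℂ) * ((√q.1)⁻¹ : ℝ) -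
        2 * Complex.I * (inner ℝ θ q.2 : ℝ)) /
          (rate q.2 * (symb ((√q.1)⁻¹ • θ) q.2 + rate q.2) ^ 2)) L (𝓝 (-(‖θ‖ ^ 2 : ℂ))) := by
    have h := ((tendsto_const_nhds (x := -(‖θ‖ ^ 2 : ℂ))).div (ts.add t0) (by norm_num)).add
      (((tw.const_mul Complex.I).mul ((trc.const_mul (-(‖θ‖ ^ 2 : ℂ))).sub
        (tw.const_mul (2 * Complex.I)))).div (t0.mul ((ts.add t0).pow 2)) (by norm_num))
    convert h using 2
    all_goals norm_num
  have tz : Tendsto (fun q : ℝ × 𝔼 => Complex.exp (-2 * (q.1 * symb ((√q.1)⁻¹ • θ) q.2))) L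
      (𝓝 0) := by
    rw [tendsto_zero_iff_norm_tendsto_zero]
    have hre : Tendsto (fun q : ℝ × 𝔼 => (symb ((√q.1)⁻¹ • θ) q.2).re) L (𝓝 (1 / 2)) := by
      simpa [Function.comp_def] using (Complex.continuous_re.tendsto _).comp ts
    have h := Real.tendsto_exp_neg_atTop_nhds_zero.comp
      ((t1.atTop_mul_pos (by norm_num) hre).const_mul_atTop (show (0 : ℝ) < 2 by norm_num))
    refine h.congr fun q => ?_
    rw [Complex.norm_exp]
    simp
  have hlim := (tE.cexp.mul (((tz.const_add 1).mul tA).add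
    (((tz.const_sub 1).div ts (by norm_num)).mul tB))).div_const 2
  have e : Complex.exp (-(‖θ‖ ^ 2 : ℂ)) * ((1 + 0) * α + (1 - 0) / (1 / 2) * β) / 2 =
      Complex.exp (-‖θ‖ ^ 2) * (α / 2 + β) := by
    ring
  rw [e] at hlim
  refine hlim.congr' ?_
  have n1 := ts.eventually_ne (show (1 / 2 : ℂ) ≠ 0 by norm_num)
  have n2 := (ts.add t0).eventually_ne (show (1 / 2 + 1 / 2 : ℂ) ≠ 0 by norm_num)
  filter_upwards [n1, n2, t1.eventually_gt_atTop 0] with q h1 h2 ht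
  have hst : 0 < √q.1 := Real.sqrt_pos.2 ht
  have hr : (((√q.1)⁻¹ : ℝ) : ℂ) ≠ 0 := by exact_mod_cast (inv_pos.2 hst).ne'
  have hq : (q.1 : ℂ) = 1 / (((√q.1)⁻¹ : ℝ) : ℂ) ^ 2 := by
    rw [← Complex.ofReal_pow, inv_pow, Real.sq_sqrt ht.le]
    push_cast
    simp
  have hs0 : (rate q.2 : ℂ) ≠ 0 := by exact_mod_cast (rate_pos q.2).ne'
  have hsq : symb ((√q.1)⁻¹ • θ) q.2 ^ 2 = (rate q.2 : ℂ) ^ 2 -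
      (‖θ‖ ^ 2 : ℂ) * (((√q.1)⁻¹ : ℝ) : ℂ) ^ 2 -
        2 * Complex.I * ((((√q.1)⁻¹ : ℝ) : ℂ) * (inner ℝ θ q.2 : ℝ)) := by
    rw [symb_sq]
    apply Complex.ext
    · rw [Complex.add_re, freqSq_re, ← Complex.ofReal_pow, rate_sq, norm_smul]
      simp [pow_two, abs_of_nonneg (Real.sqrt_nonneg q.1)]
      ring
    · rw [Complex.add_im, freqSq_im, real_inner_smul_left]
      simp [pow_two]
  have hE := phase_identity (w := ((inner ℝ θ q.2 : ℝ) : ℂ)) hr hs0 h2 hsq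
  rw [← hE, kernelInt, propC, propS, if_neg h1, Complex.cosh, Complex.sinh]
  simp only [Pi.div_apply]
  generalize symb ((√q.1)⁻¹ • θ) q.2 = s at *
  have x1 : ∀ z : ℂ, Complex.exp (-(q.1 * s)) = Complex.exp (q.1 * s) *
      Complex.exp (-2 * (q.1 * s)) := fun z => by
    rw [← Complex.exp_add]
    ring_nf
  have x2 : Complex.exp ((((√q.1)⁻¹ : ℝ) : ℂ)⁻¹ * (inner ℝ θ q.2 : ℝ) / rate q.2 * Complex.I -
      rate q.2 / (((√q.1)⁻¹ : ℝ) : ℂ) ^ 2 + s / (((√q.1)⁻¹ : ℝ) : ℂ) ^ 2) =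
      Complex.exp ((((√q.1)⁻¹ : ℝ) : ℂ)⁻¹ * (inner ℝ θ q.2 : ℝ) / rate q.2 * Complex.I -
        q.1 * rate q.2) * Complex.exp (q.1 * s) := by
    rw [← Complex.exp_add]
    congr 1
    rw [hq]
    ring
  rw [x1 0, x2]
  push_cast
  field_simp

theorem norm_amplitude_le {A B : 𝔼 → 𝔼 → ℂ} {α β : ℂ} (hA : GoodAmplitude A α)
    (hB : GoodAmplitude B β) (N : ℕ) : ∃ C, 0 ≤ C ∧ ∀ ξ η : 𝔼, ‖η‖ ≤ 1 / 4 → ∀ t, 0 ≤ t →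
      (1 + ‖ξ‖ ^ 2) ^ N * ‖propC (symb ξ η) t * A ξ η + propS (symb ξ η) t * B ξ η‖ ≤
        C * (Real.exp (t * rate η) * Real.exp (-(t * gain ξ / 2))) := by
  obtain ⟨C, hC⟩ := hA.2 N
  obtain ⟨D, hD⟩ := hB.2 N
  have hC0 : 0 ≤ C := le_trans (by positivity) (hC 0 0 (by simp))
  have hD0 : 0 ≤ D := le_trans (by positivity) (hD 0 0 (by simp))
  refine ⟨C + 8 * D, by positivity, fun ξ η hη t ht => ?_⟩
  have h1 := norm_propC_symb_le ξ hη ht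
  have h2 := norm_propS_symb_le ξ hη ht
  set M := Real.exp (t * rate η) * Real.exp (-(t * gain ξ / 2))
  have hM : 0 ≤ M := by positivity
  calc (1 + ‖ξ‖ ^ 2) ^ N * ‖propC (symb ξ η) t * A ξ η + propS (symb ξ η) t * B ξ η‖
      ≤ (1 + ‖ξ‖ ^ 2) ^ N * (‖propC (symb ξ η) t‖ * ‖A ξ η‖ +
          ‖propS (symb ξ η) t‖ * ‖B ξ η‖) := by
        gcongr
        refine (norm_add_le _ _).trans ?_
        rw [norm_mul, norm_mul]
    _ ≤ (1 + ‖ξ‖ ^ 2) ^ N * (M * ‖A ξ η‖ + 8 * M * ‖B ξ η‖) := by gcongr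
    _ = M * ((1 + ‖ξ‖ ^ 2) ^ N * ‖A ξ η‖) + 8 * M * ((1 + ‖ξ‖ ^ 2) ^ N * ‖B ξ η‖) := by ring
    _ ≤ M * C + 8 * M * D := by
        gcongr
        · exact hC ξ η hη
        · exact hD ξ η hη
    _ = (C + 8 * D) * M := by ring

theorem integrable_one_add_norm_sq_inv :
    Integrable fun θ : 𝔼 => ((1 + ‖θ‖ ^ 2) ^ (n + 1))⁻¹ := by
  have h := integrable_rpow_neg_one_add_norm_sq (E := 𝔼) (μ := volume) (r := 2 * (n + 1 : ℕ))
    (by rw [finrank_euclideanSpace_fin]; push_cast; linarith [Nat.cast_nonneg (α := ℝ) n])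
  refine h.congr (Eventually.of_forall fun θ => ?_)
  have h0 : (0 : ℝ) ≤ 1 + ‖θ‖ ^ 2 := by positivity
  simp only
  rw [show (-(2 * ((n + 1 : ℕ) : ℝ)) / 2) = -((n + 1 : ℕ) : ℝ) by ring, Real.rpow_neg h0,
    Real.rpow_natCast]

theorem norm_kernelInt_le {A B : 𝔼 → 𝔼 → ℂ} {α β : ℂ} (hA : GoodAmplitude A α)
    (hB : GoodAmplitude B β) (N : ℕ) : ∃ C, ∀ q : ℝ × 𝔼, 1 ≤ q.1 → ‖q.2‖ ≤ 1 / 4 →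
      ∀ θ, ‖kernelInt A B q θ‖ ≤ C * ((1 + ‖θ‖ ^ 2) ^ N)⁻¹ := by
  obtain ⟨C, hC0, hC⟩ := norm_amplitude_le hA hB N
  refine ⟨C * (16 * N) ^ N, fun q ht hη θ => ?_⟩
  have h1 := hC ((√q.1)⁻¹ • θ) q.2 hη q.1 (by linarith)
  have h2 := exp_gain_le N θ ht
  rw [kernelInt, norm_mul, Complex.norm_exp]
  have e : ((((√q.1)⁻¹⁻¹ : ℝ) : ℂ) * (inner ℝ θ q.2 : ℝ) / rate q.2 * Complex.I -
      q.1 * rate q.2).re = -(q.1 * rate q.2) := by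
    rw [show ((((√q.1)⁻¹⁻¹ : ℝ) : ℂ) * (inner ℝ θ q.2 : ℝ) / rate q.2 * Complex.I -
      q.1 * rate q.2) = (((√q.1)⁻¹⁻¹ * inner ℝ θ q.2 / rate q.2 : ℝ) : ℂ) * Complex.I -
        ((q.1 * rate q.2 : ℝ) : ℂ) by push_cast; rfl]
    rw [Complex.sub_re, Complex.re_ofReal_mul, Complex.I_re, Complex.ofReal_re]
    ring
  rw [e, ← div_eq_mul_inv, le_div_iff₀ (by positivity)]
  generalize ‖propC (symb ((√q.1)⁻¹ • θ) q.2) q.1 * A ((√q.1)⁻¹ • θ) q.2 +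
    propS (symb ((√q.1)⁻¹ • θ) q.2) q.1 * B ((√q.1)⁻¹ • θ) q.2‖ = Z at *
  set P := (1 + ‖(√q.1)⁻¹ • θ‖ ^ 2) ^ N with hP
  have hP0 : 0 < P := by positivity
  have h3 : Real.exp (-(q.1 * rate q.2)) * Real.exp (q.1 * rate q.2) = 1 := by
    rw [← Real.exp_add, neg_add_cancel, Real.exp_zero]
  set G := Real.exp (-(q.1 * gain ((√q.1)⁻¹ • θ) / 2))
  have h4 : P * (Real.exp (-(q.1 * rate q.2)) * Z) ≤ C * G := by
    calc P * (Real.exp (-(q.1 * rate q.2)) * Z) = Real.exp (-(q.1 * rate q.2)) * (P * Z) := by ring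
      _ ≤ Real.exp (-(q.1 * rate q.2)) * (C * (Real.exp (q.1 * rate q.2) * G)) := by gcongr
      _ = C * G := by linear_combination C * G * h3
  have h5 : P * (Real.exp (-(q.1 * rate q.2)) * Z * (1 + ‖θ‖ ^ 2) ^ N) ≤
      P * (C * (16 * N) ^ N) := by
    calc P * (Real.exp (-(q.1 * rate q.2)) * Z * (1 + ‖θ‖ ^ 2) ^ N)
        = P * (Real.exp (-(q.1 * rate q.2)) * Z) * (1 + ‖θ‖ ^ 2) ^ N := by ring
      _ ≤ C * G * (1 + ‖θ‖ ^ 2) ^ N := by gcongr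
      _ = C * ((1 + ‖θ‖ ^ 2) ^ N * G) := by ring
      _ ≤ C * ((16 * N) ^ N * P) := by gcongr
      _ = P * (C * (16 * N) ^ N) := by ring
  exact le_of_mul_le_mul_left h5 hP0

theorem continuous_fourierLaplace_left {ψ : 𝔼 → ℝ} (h : Continuous ψ) (hc : HasCompactSupport ψ)
    (η : 𝔼) : Continuous fun ξ => fourierLaplace ψ ξ η := by
  have : Continuous fun q : 𝔼 × 𝔼 => ψ q.2 • planeWave q.1 η q.2 := by
    unfold planeWave
    fun_prop
  have h2 := continuous_parametric_integral_of_continuous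
    (f := fun (ξ : 𝔼) x => ψ x • planeWave ξ η x) (μ := volume) this hc.isCompact
  refine h2.congr fun p => setIntegral_eq_integral_of_forall_compl_eq_zero fun x hx => ?_
  rw [image_eq_zero_of_notMem_tsupport hx, zero_smul]

open scoped FourierTransform in
theorem fourierLaplace_inversion {ψ : 𝔼 → ℝ} (h : Continuous ψ) (hc : HasCompactSupport ψ)
    {η : 𝔼} (hi : Integrable fun ξ => fourierLaplace ψ ξ η) {r : ℝ} (hr : 0 < r) (x : 𝔼) :
    ((2 * π / r) ^ n * (Real.exp (inner ℝ η x) * ψ x) : ℝ) =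
      ∫ θ : 𝔼, Complex.exp ((r * inner ℝ θ x : ℝ) * Complex.I) *
        fourierLaplace ψ (r • θ) η := by
  set v : 𝔼 → ℂ := fun x => ((Real.exp (inner ℝ η x) * ψ x : ℝ) : ℂ) with hv
  have cv : Continuous v := by fun_prop
  have kv : HasCompactSupport v := by
    have h1 : HasCompactSupport fun x => Real.exp (inner ℝ η x) * ψ x := hc.mul_left
    exact h1.comp_left (g := Complex.ofReal) Complex.ofReal_zero
  have hF : 𝓕 v = fun w => fourierLaplace ψ ((2 * π) • w) η := by
    funext w
    rw [Real.fourier_eq']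
    refine integral_congr_ae (Eventually.of_forall fun y => ?_)
    simp only [hv, planeWave, smul_eq_mul, Complex.real_smul, real_inner_smul_left]
    rw [Complex.ofReal_mul (Real.exp _), Complex.ofReal_exp, ← mul_assoc, ← Complex.exp_add, mul_comm,
      real_inner_comm y w]
    congr 2
    push_cast
    ring
  have iF : Integrable (𝓕 v) := by
    rw [hF]
    exact hi.comp_smul (by positivity)
  have hinv := congrFun (cv.fourierInv_fourier_eq (cv.integrable_of_hasCompactSupport kv) iF) x
  rw [Real.fourierInv_eq', hF] at hinv
  have hs := Measure.integral_comp_smul (volume : Measure 𝔼) (fun w : 𝔼 =>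
    Complex.exp ((2 * π * inner ℝ w x : ℝ) * Complex.I) • fourierLaplace ψ ((2 * π) • w) η)
    (r / (2 * π))
  rw [hinv, finrank_euclideanSpace_fin] at hs
  have hp : 0 < r / (2 * π) := by positivity
  calc (((2 * π / r) ^ n * (Real.exp (inner ℝ η x) * ψ x) : ℝ) : ℂ)
      = |((r / (2 * π)) ^ n)⁻¹| • v x := by
        rw [abs_of_pos (by positivity), ← inv_pow, inv_div, hv, Complex.real_smul]
        push_cast
        rfl
    _ = _ := by
        rw [← hs]
        refine integral_congr_ae (Eventually.of_forall fun θ => ?_)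
        simp only [smul_eq_mul, smul_smul, real_inner_smul_left]
        rw [show 2 * π * (r / (2 * π)) = r by field_simp,
          show 2 * π * (r / (2 * π) * inner ℝ θ x) = r * inner ℝ θ x by field_simp]

/-- The normalising factor at time `t` and point `(t / rate η) • η`. -/
def normFactor (q : ℝ × 𝔼) : ℝ :=
  (2 * π * √q.1) ^ n * Real.exp (inner ℝ q.2 ((q.1 / rate q.2) • q.2) - q.1 * rate q.2 + q.1 / 2)

theorem normFactor_pos {q : ℝ × 𝔼} (h : 0 < q.1) : 0 < normFactor q := by
  unfold normFactor
  have := Real.sqrt_pos.2 h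
  positivity

theorem normFactor_mul {a : 𝔼 → ℝ → ℝ} {A B : 𝔼 → 𝔼 → ℂ} {α β : ℂ} (h : HasAmplitude a A B)
    (hA : GoodAmplitude A α) (hB : GoodAmplitude B β)
    (ha : ∀ t, 0 < t → Continuous fun x => a x t)
    (hc : ∀ t, 0 < t → HasCompactSupport fun x => a x t) {q : ℝ × 𝔼} (h1 : 1 ≤ q.1)
    (h2 : ‖q.2‖ ≤ 1 / 4) : AEStronglyMeasurable (kernelInt A B q) ∧
    ((normFactor q * a ((q.1 / rate q.2) • q.2) q.1 : ℝ) : ℂ) = ∫ θ, kernelInt A B q θ := by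
  obtain ⟨t, η⟩ := q
  simp only at h1 h2
  have ht : 0 < t := by linarith
  have hst : 0 < √t := Real.sqrt_pos.2 ht
  have cF := continuous_fourierLaplace_left (ha t ht) (hc t ht) η
  have hi : Integrable fun ξ => fourierLaplace (fun x => a x t) ξ η := by
    obtain ⟨C, hC0, hC⟩ := norm_amplitude_le hA hB (n + 1)
    refine (integrable_one_add_norm_sq_inv.const_mul
      (C * Real.exp (t * rate η) * Real.exp (-(t / 2)))).mono' cF.aestronglyMeasurable
      (Eventually.of_forall fun ξ => ?_)
    have h3 := hC ξ η h2 t ht.le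
    rw [← h t ht ξ η, norm_mul, Complex.norm_exp, Complex.ofReal_re] at h3
    rw [← div_eq_mul_inv, le_div_iff₀ (by positivity)]
    have h4 : Real.exp (-(t * gain ξ / 2)) ≤ 1 := by
      rw [Real.exp_le_one_iff]
      have := mul_nonneg ht.le (gain_nonneg ξ)
      linarith
    have h5 : Real.exp (-(t / 2)) * Real.exp (t / 2) = 1 := by
      rw [← Real.exp_add, neg_add_cancel, Real.exp_zero]
    set Z := ‖fourierLaplace (fun x => a x t) ξ η‖
    calc Z * (1 + ‖ξ‖ ^ 2) ^ (n + 1)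
        = Real.exp (-(t / 2)) * ((1 + ‖ξ‖ ^ 2) ^ (n + 1) * (Real.exp (t / 2) * Z)) := by
          linear_combination -Z * (1 + ‖ξ‖ ^ 2) ^ (n + 1) * h5
      _ ≤ Real.exp (-(t / 2)) * (C * (Real.exp (t * rate η) * Real.exp (-(t * gain ξ / 2)))) := by
          gcongr
      _ ≤ Real.exp (-(t / 2)) * (C * (Real.exp (t * rate η) * 1)) := by gcongr
      _ = _ := by ring
  have hr : 0 < (√t)⁻¹ := inv_pos.2 hst
  have hk : ∀ θ, kernelInt A B (t, η) θ = Complex.exp ((t / 2 - t * rate η : ℝ) : ℂ) *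
      (Complex.exp (((√t)⁻¹ * inner ℝ θ ((t / rate η) • η) : ℝ) * Complex.I) *
        fourierLaplace (fun x => a x t) ((√t)⁻¹ • θ) η) := by
    intro θ
    rw [kernelInt, ← h t ht, ← mul_assoc, ← mul_assoc, ← Complex.exp_add, ← Complex.exp_add]
    congr 2
    simp only [real_inner_smul_right]
    have hrate := (rate_pos η).ne'
    have e : (√t)⁻¹ * (t / rate η * inner ℝ θ η) = (√t)⁻¹⁻¹ * inner ℝ θ η / rate η := by
      rw [inv_inv]
      field_simp
      rw [Real.sq_sqrt ht.le]
    rw [e]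
    push_cast
    ring
  constructor
  · rw [show kernelInt A B (t, η) = _ from funext hk]
    refine Continuous.aestronglyMeasurable ?_
    have : Continuous fun θ : 𝔼 => fourierLaplace (fun x => a x t) ((√t)⁻¹ • θ) η :=
      cF.comp (continuous_const_smul _)
    fun_prop
  · simp_rw [hk]
    rw [integral_const_mul, ← fourierLaplace_inversion (ha t ht) (hc t ht) hi hr, ←
      Complex.ofReal_exp, ← Complex.ofReal_mul]
    congr 1
    rw [normFactor, div_inv_eq_mul, add_comm, add_sub_left_comm, Real.exp_add]
    ring

/-- The Gaussian constant `∫ exp (-|θ|²)`. -/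
def gaussConst (n : ℕ) : ℝ := ∫ θ : EuclideanSpace ℝ (Fin n), Real.exp (-‖θ‖ ^ 2)

theorem gaussConst_pos (n : ℕ) : 0 < gaussConst n := by
  have := GaussianFourier.integral_rexp_neg_mul_sq_norm (V := EuclideanSpace ℝ (Fin n)) one_pos
  simp only [neg_mul, one_mul] at this
  rw [gaussConst, this]
  positivity

theorem tendsto_normFactor_mul {a : 𝔼 → ℝ → ℝ} {A B : 𝔼 → 𝔼 → ℂ} {α β : ℝ}
    (h : HasAmplitude a A B) (hA : GoodAmplitude A α) (hB : GoodAmplitude B β)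
    (ha : ∀ t, 0 < t → Continuous fun x => a x t)
    (hc : ∀ t, 0 < t → HasCompactSupport fun x => a x t) :
    Tendsto (fun q : ℝ × 𝔼 => normFactor q * a ((q.1 / rate q.2) • q.2) q.1) (atTop ×ˢ 𝓝 0)
      (𝓝 (gaussConst n * (α / 2 + β))) := by
  have ev : ∀ᶠ q : ℝ × 𝔼 in atTop ×ˢ 𝓝 0, 1 ≤ q.1 ∧ ‖q.2‖ ≤ 1 / 4 := by
    have h1 : ∀ᶠ η : 𝔼 in 𝓝 0, ‖η‖ ≤ 1 / 4 := by
      filter_upwards [closedBall_mem_nhds (0 : 𝔼) (show (0 : ℝ) < 1 / 4 by norm_num)] with η hη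
      simpa using hη
    exact (tendsto_fst.eventually (eventually_ge_atTop 1)).and (tendsto_snd.eventually h1)
  obtain ⟨C, hC⟩ := norm_kernelInt_le hA hB (n + 1)
  have hlim : Tendsto (fun q : ℝ × 𝔼 => ∫ θ, kernelInt A B q θ) (atTop ×ˢ 𝓝 0)
      (𝓝 (∫ θ : 𝔼, Complex.exp (-‖θ‖ ^ 2) * (α / 2 + β))) :=
    tendsto_integral_filter_of_dominated_convergence
      (fun θ : 𝔼 => C * ((1 + ‖θ‖ ^ 2) ^ (n + 1))⁻¹)
      (ev.mono fun q hq => (normFactor_mul h hA hB ha hc hq.1 hq.2).1)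
      (ev.mono fun q hq => Eventually.of_forall (hC q hq.1 hq.2))
      (integrable_one_add_norm_sq_inv.const_mul C)
      (Eventually.of_forall fun θ => tendsto_kernelInt hA hB θ)
  have e : ∫ θ : 𝔼, Complex.exp (-‖θ‖ ^ 2) * (α / 2 + β) =
      ((gaussConst n * (α / 2 + β) : ℝ) : ℂ) := by
    rw [integral_mul_const, Complex.ofReal_mul, gaussConst, ← integral_complex_ofReal]
    push_cast
    rfl
  rw [e] at hlim
  have h2 : Tendsto (fun q : ℝ × 𝔼 =>
      ((normFactor q * a ((q.1 / rate q.2) • q.2) q.1 : ℝ) : ℂ)) (atTop ×ˢ 𝓝 0)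
      (𝓝 ((gaussConst n * (α / 2 + β) : ℝ) : ℂ)) :=
    hlim.congr' (ev.mono fun q hq => (normFactor_mul h hA hB ha hc hq.1 hq.2).2.symm)
  simpa [Function.comp_def] using (Complex.continuous_re.tendsto _).comp h2

/-- The space-time filter `t → ∞`, `x / t → 0`. -/
def coneFilter (n : ℕ) : Filter (EuclideanSpace ℝ (Fin n) × ℝ) :=
  comap (fun p => (p.2, p.2⁻¹ • p.1)) (atTop ×ˢ 𝓝 0)

/-- The saddle point associated with the velocity `b`. -/
def saddle (b : 𝔼) : 𝔼 := (2 * √(1 - ‖b‖ ^ 2))⁻¹ • b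

theorem rate_saddle {b : 𝔼} (hb : ‖b‖ < 1) : rate (saddle b) = (2 * √(1 - ‖b‖ ^ 2))⁻¹ := by
  have h0 : 0 < 1 - ‖b‖ ^ 2 := by nlinarith [norm_nonneg b]
  have h1 : 0 ≤ (2 * √(1 - ‖b‖ ^ 2))⁻¹ := by positivity
  rw [rate, saddle, norm_smul, Real.norm_of_nonneg h1, Real.sqrt_eq_iff_eq_sq (by positivity) h1,
    mul_pow, inv_pow, mul_pow, Real.sq_sqrt h0.le]
  field_simp
  ring

theorem tendsto_saddle : Tendsto (saddle : 𝔼 → 𝔼) (𝓝 0) (𝓝 0) := by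
  have : ContinuousAt (saddle : 𝔼 → 𝔼) 0 := by
    have h : ContinuousAt (fun b : 𝔼 => 2 * √(1 - ‖b‖ ^ 2)) 0 := by fun_prop
    exact (h.inv₀ (by simp)).smul continuousAt_id
  simpa [ContinuousAt, saddle] using this

theorem tendsto_coneFilter {a : 𝔼 → ℝ → ℝ} {c : ℝ}
    (h : Tendsto (fun q : ℝ × 𝔼 => normFactor q * a ((q.1 / rate q.2) • q.2) q.1)
      (atTop ×ˢ 𝓝 0) (𝓝 c)) :
    Tendsto (fun p : 𝔼 × ℝ => normFactor (p.2, saddle (p.2⁻¹ • p.1)) * a p.1 p.2)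
      (coneFilter n) (𝓝 c) := by
  have h0 : Tendsto (fun p : 𝔼 × ℝ => (p.2, p.2⁻¹ • p.1)) (coneFilter n) (atTop ×ˢ 𝓝 0) :=
    tendsto_comap
  have h1 : Tendsto (fun p : 𝔼 × ℝ => p.2) (coneFilter n) atTop := tendsto_fst.comp h0
  have h2 : Tendsto (fun p : 𝔼 × ℝ => p.2⁻¹ • p.1) (coneFilter n) (𝓝 0) := tendsto_snd.comp h0
  refine (h.comp (h1.prodMk (tendsto_saddle.comp h2))).congr' ?_
  filter_upwards [h1.eventually_gt_atTop 0, h2 (ball_mem_nhds 0 one_pos)] with p hp hb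
  have hb' : ‖p.2⁻¹ • p.1‖ < 1 := by simpa using hb
  have h3 : 0 < 1 - ‖p.2⁻¹ • p.1‖ ^ 2 := by nlinarith [norm_nonneg (p.2⁻¹ • p.1)]
  have h4 : (2 * √(1 - ‖p.2⁻¹ • p.1‖ ^ 2))⁻¹ ≠ 0 := by positivity
  simp only [Function.comp_apply]
  congr 2
  rw [rate_saddle hb', saddle, smul_smul, smul_smul, div_mul_cancel₀ _ h4,
    mul_inv_cancel₀ hp.ne', one_smul]

theorem eventually_coneFilter {p : 𝔼 × ℝ → Prop} (h : ∀ᶠ q in coneFilter n, p q) :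
    ∃ δ > 0, ∃ T, ∀ t ≥ T, ∀ x : 𝔼, ‖t⁻¹ • x‖ < δ → p (x, t) := by
  obtain ⟨s, hs, hsp⟩ := mem_comap.1 h
  obtain ⟨s1, h1, s2, h2, h12⟩ := mem_prod_iff.1 hs
  obtain ⟨T, hT⟩ := mem_atTop_sets.1 h1
  obtain ⟨δ, hδ, hb⟩ := Metric.mem_nhds_iff.1 h2
  exact ⟨δ, hδ, T, fun t ht x hx => hsp (h12 ⟨hT t ht, hb (by simpa using hx)⟩)⟩

theorem centroid_mem_interior {h : 𝔼 → ℝ} (hcont : Continuous h) (hc : HasCompactSupport h)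
    (hpos : ∀ x, 0 ≤ h x) (hne : h ≠ 0) : centroid h ∈ interior (CS h) := by
  by_contra hm
  obtain ⟨L, hL⟩ := geometric_hahn_banach_open_point (convex_convexHull ℝ (tsupport h)).interior
    isOpen_interior hm
  obtain ⟨x₀, hx₀⟩ := Function.ne_iff.1 hne
  have hM : 0 < ∫ y, h y :=
    hcont.integral_pos_of_hasCompactSupport_nonneg_nonzero hc hpos hx₀
  have hsub : ∀ y, h y ≠ 0 → y ∈ interior (CS h) := fun y hy =>
    mem_interior.2 ⟨Function.support h, (subset_tsupport h).trans (subset_convexHull ℝ _),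
      hcont.isOpen_support, hy⟩
  have hi : Integrable fun y => h y • y :=
    (hcont.smul continuous_id).integrable_of_hasCompactSupport hc.smul_right
  have hi' : Integrable h := hcont.integrable_of_hasCompactSupport hc
  have e : ∫ y, h y * (L (centroid h) - L y) = 0 := by
    have h1 : ∀ y, h y * (L (centroid h) - L y) = h y * L (centroid h) - L (h y • y) := fun y => by
      rw [map_smul, smul_eq_mul]; ring
    simp_rw [h1]
    rw [integral_sub (hi'.mul_const _) (L.integrable_comp hi), integral_mul_const,
      L.integral_comp_comm hi, centroid, map_smul, smul_eq_mul, mul_inv_cancel_left₀ hM.ne',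
      sub_self]
  have hp : 0 < ∫ y, h y * (L (centroid h) - L y) := by
    refine Continuous.integral_pos_of_hasCompactSupport_nonneg_nonzero (x := x₀)
      (hcont.mul (continuous_const.sub L.continuous)) hc.mul_right (fun y => ?_) ?_
    · by_cases hy : h y = 0
      · simp [hy]
      · exact mul_nonneg (hpos y) (sub_nonneg.2 (hL y (hsub y hy)).le)
    · exact mul_ne_zero hx₀ (sub_pos.2 (hL x₀ (hsub x₀ hx₀))).ne'
  exact hp.ne' e

theorem centroid_apply {h : 𝔼 → ℝ} (hcont : Continuous h) (hc : HasCompactSupport h) (j : Fin n) :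
    centroid h j = (∫ y, h y)⁻¹ * ∫ y, y j * h y := by
  have hi : Integrable fun y => h y • y :=
    (hcont.smul continuous_id).integrable_of_hasCompactSupport hc.smul_right
  have := (EuclideanSpace.proj j : 𝔼 →L[ℝ] ℝ).integral_comp_comm hi
  simp only [EuclideanSpace.coe_proj, PiLp.smul_apply, smul_eq_mul] at this
  rw [centroid, PiLp.smul_apply, smul_eq_mul, ← this]
  simp_rw [mul_comm]

theorem norm_le_sum_abs (v : 𝔼) : ‖v‖ ≤ ∑ i, |v i| := by
  conv_lhs => rw [← (EuclideanSpace.basisFun (Fin n) ℝ).sum_repr v]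
  refine (norm_sum_le _ _).trans (Finset.sum_le_sum fun i _ => ?_)
  simp [norm_smul]

theorem norm_dual_le {L : 𝔼 →L[ℝ] ℝ} {ε : ℝ} (hε : 0 ≤ ε)
    (h : ∀ k, |L (EuclideanSpace.single k (1 : ℝ))| ≤ ε) : ‖L‖ ≤ n * ε := by
  refine L.opNorm_le_bound (by positivity) fun v => ?_
  have e : L v = ∑ k, v k * L (EuclideanSpace.single k (1 : ℝ)) := by
    conv_lhs => rw [← (EuclideanSpace.basisFun (Fin n) ℝ).sum_repr v]
    simp [map_sum]
  rw [e]
  calc ‖∑ k, v k * L (EuclideanSpace.single k (1 : ℝ))‖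
      ≤ ∑ _k : Fin n, ‖v‖ * ε := by
        refine norm_sum_le_of_le _ fun k _ => ?_
        rw [norm_mul]
        exact mul_le_mul (PiLp.norm_apply_le v k) (h k) (norm_nonneg _) (norm_nonneg _)
    _ = n * ε * ‖v‖ := by simp; ring

/-- A contraction of a compact convex set, given coordinatewise, has a unique fixed point. -/
theorem existsUnique_fixedPoint {K : Set 𝔼} (hK : IsCompact K) (hconv : Convex ℝ K)
    (hne : K.Nonempty) {G : Fin n → 𝔼 → ℝ} {ε : ℝ} (hε : 0 ≤ ε) (hε' : n * (n * ε) < 1)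
    (hd : ∀ j, ∀ x ∈ K, DifferentiableAt ℝ (G j) x)
    (hG : ∀ j k, ∀ x ∈ K, |fderiv ℝ (G j) x (EuclideanSpace.single k (1 : ℝ))| ≤ ε)
    (hmaps : ∀ x ∈ K, WithLp.toLp 2 (fun j => G j x) ∈ K) :
    ∃ p ∈ K, ∀ x ∈ K, (∀ j, x j = G j x) ↔ x = p := by
  set F : 𝔼 → 𝔼 := fun x => WithLp.toLp 2 (fun j => G j x) with hF
  have lip : ∀ x ∈ K, ∀ y ∈ K, ‖F x - F y‖ ≤ n * (n * ε) * ‖x - y‖ := by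
    intro x hx y hy
    have h1 : ∀ j, |G j x - G j y| ≤ n * ε * ‖x - y‖ := fun j =>
      hconv.norm_image_sub_le_of_norm_fderiv_le (𝕜 := ℝ) (hd j)
        (fun z hz => norm_dual_le hε fun k => hG j k z hz) hy hx
    calc ‖F x - F y‖ ≤ ∑ j, |(F x - F y) j| := norm_le_sum_abs _
      _ ≤ ∑ _j : Fin n, n * ε * ‖x - y‖ := Finset.sum_le_sum fun j _ => h1 j
      _ = _ := by simp; ring
  have hm : MapsTo F K K := hmaps
  have hc : ContractingWith ⟨n * (n * ε), by positivity⟩ (hm.restrict F K K) := by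
    refine ⟨by exact_mod_cast hε', LipschitzWith.of_dist_le_mul fun x y => ?_⟩
    rw [Subtype.dist_eq, Subtype.dist_eq, dist_eq_norm, dist_eq_norm]
    exact lip x x.2 y y.2
  obtain ⟨x₀, hx₀⟩ := hne
  obtain ⟨p, hp, hfix, -⟩ := hc.exists_fixedPoint' hK.isComplete hm hx₀ (edist_ne_top _ _)
  refine ⟨p, hp, fun x hx => ⟨fun h => ?_, ?_⟩⟩
  · have hx' : F x = x := by
      ext j
      exact (h j).symm
    have h2 := lip x hx p hp
    rw [hx', hfix] at h2
    by_contra hxp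
    have h3 : 0 < ‖x - p‖ := norm_pos_iff.2 (sub_ne_zero.2 hxp)
    nlinarith
  · rintro rfl j
    exact (congrArg (fun v : 𝔼 => v j) hfix).symm

theorem HasAmplitude.tendsto_coneFilter {a : 𝔼 → ℝ → ℝ} {A B : 𝔼 → 𝔼 → ℂ} {α β : ℝ}
    (h : HasAmplitude a A B) (hA : GoodAmplitude A α) (hB : GoodAmplitude B β)
    (ha : ∀ t, 0 < t → Continuous fun x => a x t)
    (hc : ∀ t, 0 < t → HasCompactSupport fun x => a x t) :
    Tendsto (fun p : 𝔼 × ℝ => normFactor (p.2, saddle (p.2⁻¹ • p.1)) * a p.1 p.2)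
      (coneFilter n) (𝓝 (gaussConst n * (α / 2 + β))) :=
  _root_.tendsto_coneFilter (tendsto_normFactor_mul h hA hB ha hc)

theorem HasAmplitude.tendsto_coneFilter_fderiv {a : 𝔼 → ℝ → ℝ} {A B : 𝔼 → 𝔼 → ℂ} {α β : ℂ}
    (h : HasAmplitude a A B) (hA : GoodAmplitude A α) (hB : GoodAmplitude B β)
    (ha : ∀ t, 0 < t → ContDiff ℝ 1 fun x => a x t)
    (hc : ∀ t, 0 < t → HasCompactSupport fun x => a x t) (k : Fin n) :
    Tendsto (fun p : 𝔼 × ℝ => normFactor (p.2, saddle (p.2⁻¹ • p.1)) *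
      fderiv ℝ (fun z => a z p.2) p.1 (EuclideanSpace.single k (1 : ℝ))) (coneFilter n) (𝓝 0) := by
  have hz : ∀ {C : 𝔼 → 𝔼 → ℂ} {γ : ℂ}, GoodAmplitude C γ →
      GoodAmplitude (fun ξ η => -freq ξ η k * C ξ η) ((0 : ℝ) : ℂ) := fun hC => by
    simpa using (hC.freq_mul k).const_mul (-1)
  have := (h.fderiv_apply ha hc k).tendsto_coneFilter (hz hA) (hz hB)
    (fun t ht => ((ha t ht).continuous_fderiv one_ne_zero).clm_apply continuous_const)
    (fun t ht => (hc t ht).fderiv_apply (𝕜 := ℝ) _)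
  simpa using this

theorem fderiv_div_apply {P Q : 𝔼 → ℝ} {x : 𝔼} (hP : ContDiff ℝ 1 P) (hQ : ContDiff ℝ 1 Q)
    (h : P x ≠ 0) : DifferentiableAt ℝ (fun z => Q z / P z) x ∧ ∀ v,
      fderiv ℝ (fun z => Q z / P z) x v = (fderiv ℝ Q x v - Q x / P x * fderiv ℝ P x v) / P x := by
  have dP := hP.differentiable one_ne_zero x
  have dQ := hQ.differentiable one_ne_zero x
  have d : DifferentiableAt ℝ (fun z => Q z / P z) x := by
    simpa only [div_eq_mul_inv] using dQ.fun_mul (dP.fun_inv h)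
  refine ⟨d, fun v => ?_⟩
  have e : Q =ᶠ[𝓝 x] fun z => Q z / P z * P z := by
    filter_upwards [hP.continuous.continuousAt.eventually_ne h] with z hz
    rw [div_mul_cancel₀ _ hz]
  rw [e.fderiv_eq, fderiv_fun_mul d dP]
  simp only [add_apply, smul_apply, smul_eq_mul]
  field_simp
  ring

/-- If, up to a positive factor, `P` and `Q` converge along the cone filter while their gradients
vanish in the limit, then `Q / P` converges and its gradient tends to zero. -/
theorem eventually_div_coneFilter {P Q : 𝔼 → ℝ → ℝ} {c m : ℝ} {N : 𝔼 × ℝ → ℝ} (hc : 0 < c)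
    (hN : ∀ᶠ p in coneFilter n, 0 < N p)
    (cP : ∀ t, 0 < t → ContDiff ℝ 1 fun x => P x t) (cQ : ∀ t, 0 < t → ContDiff ℝ 1 fun x => Q x t)
    (hP : Tendsto (fun p => N p * P p.1 p.2) (coneFilter n) (𝓝 c))
    (hQ : Tendsto (fun p => N p * Q p.1 p.2) (coneFilter n) (𝓝 (c * m)))
    (dP : ∀ k, Tendsto (fun p : 𝔼 × ℝ => N p *
      fderiv ℝ (fun z => P z p.2) p.1 (EuclideanSpace.single k (1 : ℝ))) (coneFilter n) (𝓝 0))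
    (dQ : ∀ k, Tendsto (fun p : 𝔼 × ℝ => N p *
      fderiv ℝ (fun z => Q z p.2) p.1 (EuclideanSpace.single k (1 : ℝ))) (coneFilter n) (𝓝 0))
    {ε : ℝ} (hε : 0 < ε) :
    ∀ᶠ p in coneFilter n, |Q p.1 p.2 / P p.1 p.2 - m| < ε ∧
      DifferentiableAt ℝ (fun z => Q z p.2 / P z p.2) p.1 ∧
      ∀ k, |fderiv ℝ (fun z => Q z p.2 / P z p.2) p.1 (EuclideanSpace.single k (1 : ℝ))| ≤ ε := by
  have ht : ∀ᶠ p : 𝔼 × ℝ in coneFilter n, 0 < p.2 :=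
    (tendsto_fst.comp tendsto_comap).eventually_gt_atTop 0
  have hP0 : ∀ᶠ p in coneFilter n, 0 < N p * P p.1 p.2 := hP (lt_mem_nhds hc)
  have hq : Tendsto (fun p : 𝔼 × ℝ => Q p.1 p.2 / P p.1 p.2) (coneFilter n) (𝓝 m) := by
    have h1 := hQ.div hP hc.ne'
    rw [mul_div_cancel_left₀ _ hc.ne'] at h1
    refine h1.congr' ?_
    filter_upwards [hN] with p hp
    exact mul_div_mul_left _ _ hp.ne'
  have hd : ∀ k, ∀ᶠ p in coneFilter n,
      |fderiv ℝ (fun z => Q z p.2 / P z p.2) p.1 (EuclideanSpace.single k (1 : ℝ))| ≤ ε := fun k => by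
    have h1 := ((dQ k).sub (hq.mul (dP k))).div hP hc.ne'
    simp only [mul_zero, sub_zero, zero_div] at h1
    filter_upwards [h1 (ball_mem_nhds 0 hε), hN, hP0, ht] with p hp hNp hPp htp
    have hPp' : P p.1 p.2 ≠ 0 := right_ne_zero_of_mul hPp.ne'
    rw [(fderiv_div_apply (cP _ htp) (cQ _ htp) hPp').2]
    simp only [mem_preimage, mem_ball_zero_iff, Real.norm_eq_abs, Pi.div_apply] at hp
    refine le_trans (le_of_eq ?_) hp.le
    congr 1
    field_simp
  filter_upwards [hq (ball_mem_nhds m hε), hP0, ht, eventually_all.2 hd] with p h1 h2 h3 h4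
  exact ⟨by simpa [Real.dist_eq] using h1,
    (fderiv_div_apply (cP _ h3) (cQ _ h3) (right_ne_zero_of_mul h2.ne')).1, h4⟩

namespace DampedWave

variable {f g : EuclideanSpace ℝ (Fin n) → ℝ} {u ut utt : EuclideanSpace ℝ (Fin n) → ℝ → ℝ}
  {ux utx : Fin n → EuclideanSpace ℝ (Fin n) → ℝ → ℝ} {R : ℝ}

/-- Near the origin of velocity space `u` does not vanish, `ut + u / 2` is positive, and the
critical point equation is the fixed point equation of a map that is close to a constant. -/
theorem eventually_coneFilter (W : DampedWave f g u ut utt ux utx)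
    (hf : ContDiff ℝ (⊤ : ℕ∞) f) (hg : ContDiff ℝ (⊤ : ℕ∞) g)
    (hfc : HasCompactSupport f) (hgc : HasCompactSupport g)
    (hfR : ∀ x, R < ‖x‖ → f x = 0) (hgR : ∀ x, R < ‖x‖ → g x = 0)
    (hM : 0 < ∫ x, (f + g) x) {ε : ℝ} (hε : 0 < ε) :
    ∀ᶠ p in coneFilter n, (u p.1 p.2 ≠ 0 ∧ 0 < ut p.1 p.2 + 1 / 2 * u p.1 p.2) ∧ ∀ j,
      |(p.2 * ux j p.1 p.2 + p.1 j * (ut p.1 p.2 + 1 / 2 * u p.1 p.2)) /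
        (ut p.1 p.2 + 1 / 2 * u p.1 p.2) - centroid (f + g) j| < ε ∧
      DifferentiableAt ℝ (fun z => (p.2 * ux j z p.2 + z j * (ut z p.2 + 1 / 2 * u z p.2)) /
        (ut z p.2 + 1 / 2 * u z p.2)) p.1 ∧
      ∀ k, |fderiv ℝ (fun z => (p.2 * ux j z p.2 + z j * (ut z p.2 + 1 / 2 * u z p.2)) /
        (ut z p.2 + 1 / 2 * u z p.2)) p.1 (EuclideanSpace.single k (1 : ℝ))| ≤ ε := by
  obtain ⟨Au, AP, AQ⟩ := W.hasAmplitude hfR hgR hf.continuous hg.continuous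
  have hgf : ContDiff ℝ (⊤ : ℕ∞) fun x => g x + 1 / 2 * f x := hg.add (contDiff_const.mul hf)
  have hgfc : HasCompactSupport fun x => g x + 1 / 2 * f x := hgc.add hfc.mul_left
  have Gf := goodAmplitude_fourierLaplace hf hfc
  have Ggf := goodAmplitude_fourierLaplace hgf hgfc
  have quarter : ∀ {C : 𝔼 → 𝔼 → ℂ} {γ : ℝ}, GoodAmplitude C γ →
      GoodAmplitude (fun ξ η => (1 / 4 + freqSq ξ η) * C ξ η) ((1 / 4 * γ : ℝ) : ℂ) := by
    intro C γ hC
    simpa [add_mul] using (hC.const_mul (1 / 4)).add hC.freqSq_mul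
  have Gxf : ∀ j, GoodAmplitude (fourierLaplace fun x => x j * f x) ((∫ x, x j * f x : ℝ) : ℂ) :=
    fun j => goodAmplitude_fourierLaplace ((contDiff_coord j).mul hf) hfc.mul_left
  have Gxgf : ∀ j, GoodAmplitude (fourierLaplace fun x => x j * (g x + 1 / 2 * f x))
      ((∫ x, x j * (g x + 1 / 2 * f x) : ℝ) : ℂ) := fun j =>
    goodAmplitude_fourierLaplace ((contDiff_coord j).mul hgf) hgfc.mul_left
  have GQ : ∀ j, GoodAmplitude (fun ξ η => freq ξ η j * fourierLaplace f ξ η +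
      (1 / 4 + freqSq ξ η) * fourierLaplace (fun x => x j * f x) ξ η)
      ((1 / 4 * ∫ x, x j * f x : ℝ) : ℂ) := fun j => by
    simpa using (Gf.freq_mul j).add (quarter (Gxf j))
  have cu : ∀ t, 0 < t → ContDiff ℝ 1 fun x => u x t := fun t ht =>
    (W.contDiff_u t ht.le).of_le one_le_two
  have cP : ∀ t, 0 < t → ContDiff ℝ 1 fun x => ut x t + 1 / 2 * u x t := fun t ht =>
    (W.contDiff_ut t ht.le).add (contDiff_const.mul (cu t ht))
  have cQ : ∀ j t, 0 < t → ContDiff ℝ 1 fun x => t * ux j x t + x j * (ut x t + 1 / 2 * u x t) :=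
    fun j t ht => (contDiff_const.mul (W.contDiff_ux j t ht.le)).add
      ((contDiff_coord j).mul (cP t ht))
  have ku : ∀ t, 0 < t → HasCompactSupport fun x => u x t := fun t ht =>
    W.hasCompactSupport_u hfR hgR ht.le
  have kP : ∀ t, 0 < t → HasCompactSupport fun x => ut x t + 1 / 2 * u x t := fun t ht =>
    (W.hasCompactSupport_ut hfR hgR ht.le).add (ku t ht).mul_left
  have kQ : ∀ j t, 0 < t →
      HasCompactSupport fun x => t * ux j x t + x j * (ut x t + 1 / 2 * u x t) := fun j t ht =>
    (W.hasCompactSupport_ux hfR hgR j ht.le).mul_left.add (kP t ht).mul_left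
  have int : ∀ {v : 𝔼 → ℝ}, ContDiff ℝ (⊤ : ℕ∞) v → HasCompactSupport v → Integrable v :=
    fun hv kv => hv.continuous.integrable_of_hasCompactSupport kv
  have igf : ∫ x, (g x + 1 / 2 * f x) = (∫ x, (f + g) x) - 1 / 2 * ∫ x, f x := by
    simp only [Pi.add_apply]
    rw [integral_add (int hg hgc) ((int hf hfc).const_mul _),
      integral_add (int hf hfc) (int hg hgc), integral_const_mul]
    ring
  have ixgf : ∀ j, ∫ x : 𝔼, x j * (g x + 1 / 2 * f x) =
      (∫ x, x j * (f + g) x) - 1 / 2 * ∫ x, x j * f x := fun j => by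
    have i1 := int ((contDiff_coord j).mul hf) hfc.mul_left
    have i2 := int ((contDiff_coord j).mul hg) hgc.mul_left
    simp only [Pi.add_apply, mul_add, mul_left_comm _ (1 / 2 : ℝ)]
    rw [integral_add i2 (i1.const_mul _), integral_add i1 i2, integral_const_mul]
    ring
  have hN : ∀ᶠ p : 𝔼 × ℝ in coneFilter n, 0 < normFactor (p.2, saddle (p.2⁻¹ • p.1)) := by
    filter_upwards [(tendsto_fst.comp tendsto_comap).eventually_gt_atTop 0] with p hp
    exact normFactor_pos hp
  have hc : 0 < gaussConst n * (1 / 2 * ∫ x, (f + g) x) :=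
    mul_pos (gaussConst_pos n) (by positivity)
  have Tu : Tendsto (fun p : 𝔼 × ℝ => normFactor (p.2, saddle (p.2⁻¹ • p.1)) * u p.1 p.2)
      (coneFilter n) (𝓝 (2 * (gaussConst n * (1 / 2 * ∫ x, (f + g) x)))) := by
    convert Au.tendsto_coneFilter Gf Ggf (fun t ht => (cu t ht).continuous) ku using 2
    rw [igf]
    ring
  have TP : Tendsto (fun p : 𝔼 × ℝ => normFactor (p.2, saddle (p.2⁻¹ • p.1)) *
      (ut p.1 p.2 + 1 / 2 * u p.1 p.2))
      (coneFilter n) (𝓝 (gaussConst n * (1 / 2 * ∫ x, (f + g) x))) := by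
    convert AP.tendsto_coneFilter Ggf (quarter Gf) (fun t ht => (cP t ht).continuous) kP using 2
    rw [igf]
    ring
  have TQ : ∀ j, Tendsto (fun p : 𝔼 × ℝ => normFactor (p.2, saddle (p.2⁻¹ • p.1)) *
      (p.2 * ux j p.1 p.2 + p.1 j * (ut p.1 p.2 + 1 / 2 * u p.1 p.2)))
      (coneFilter n) (𝓝 (gaussConst n * (1 / 2 * ∫ x, (f + g) x) * centroid (f + g) j)) := by
    intro j
    convert (AQ j).tendsto_coneFilter (Gxgf j) (GQ j) (fun t ht => (cQ j t ht).continuous)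
      (kQ j) using 2
    rw [ixgf, centroid_apply (h := f + g) (hf.add hg).continuous (hfc.add hgc)]
    field_simp
    ring
  refine Eventually.and ?_ (eventually_all.2 fun j => eventually_div_coneFilter hc hN cP (cQ j) TP
    (TQ j) (AP.tendsto_coneFilter_fderiv Ggf (quarter Gf) cP kP)
    ((AQ j).tendsto_coneFilter_fderiv (Gxgf j) (GQ j) (cQ j) (kQ j)) hε)
  filter_upwards [hN, Tu (lt_mem_nhds (mul_pos two_pos hc)), TP (lt_mem_nhds hc)] with p h1 h2 h3
  exact ⟨right_ne_zero_of_mul (ne_of_gt h2), (pos_iff_pos_of_mul_pos h3).1 h1⟩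

end DampedWave

theorem DampedWave.mem_critSet_iff {f g : 𝔼 → ℝ} {u ut utt : 𝔼 → ℝ → ℝ}
    {ux utx : Fin n → 𝔼 → ℝ → ℝ} (W : DampedWave f g u ut utt ux utx) {x : 𝔼} {t : ℝ} (ht : 0 < t)
    (hu : u x t ≠ 0) {P : ℝ} (hP : P ≠ 0) :
    x ∈ critSet (fun z => u z t) ↔ ∀ j, x j = (t * ux j x t + x j * P) / P := by
  have hx : x ∈ interior (tsupport fun z => u z t) :=
    mem_interior.2 ⟨Function.support fun z => u z t, subset_tsupport _,
      (W.contDiff_u t ht.le).continuous.isOpen_support, hu⟩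
  have h1 : ∀ j, x j = (t * ux j x t + x j * P) / P ↔
      fderiv ℝ (fun z => u z t) x (EuclideanSpace.single j (1 : ℝ)) = 0 := fun j => by
    rw [W.fderiv_u j x t ht.le, eq_div_iff hP, right_eq_add, mul_eq_zero, or_iff_right ht.ne']
  simp only [h1, critSet, mem_ofPred_eq, hx, true_and, gradient, map_eq_zero_iff _
    (InnerProductSpace.toDual ℝ 𝔼).symm.injective]
  refine ⟨fun h j => by rw [h, zero_apply], fun h => norm_le_zero_iff.1 ?_⟩
  simpa using norm_dual_le (ε := 0) le_rfl fun k => (abs_nonpos_iff.2 (h k))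

theorem eventually_add_lt_mul {phi : ℝ → ℝ} (h : Tendsto (fun t => phi t / t) atTop (𝓝 0))
    (R : ℝ) {δ : ℝ} (hδ : 0 < δ) : ∀ᶠ t in atTop, R + phi t < δ * t := by
  have h1 := (tendsto_const_nhds (x := R).div_atTop tendsto_id).add h
  rw [add_zero] at h1
  filter_upwards [h1 (gt_mem_nhds hδ), eventually_gt_atTop 0] with t ht ht0
  have : R / t + phi t / t < δ := ht
  rwa [← add_div, div_lt_iff₀ ht0] at this

/-- cf. Proposition `uniqueness`. For `φ` non-decreasing with `φ(0)=0`
and `φ(t)/t → 0`, there is `T ≥ max{T₀(φ), δ(CS(f),CS(h)) + d_f}` such that for all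
`t ≥ T` the set `𝒞(u(·,t)) ∩ (CS(h) + φ(t)Bⁿ)` consists of exactly one point
(`h = f + g`). -/
theorem unique_critical_point (n : ℕ) (hn : 1 ≤ n)
    (f g : EuclideanSpace ℝ (Fin n) → ℝ)
    (hf : ContDiff ℝ (⊤ : ℕ∞) f) (hg : ContDiff ℝ (⊤ : ℕ∞) g)
    (hfc : HasCompactSupport f) (hgc : HasCompactSupport g)
    (hne : f + g ≠ 0) (hpos : ∀ x, 0 ≤ f x + g x)
    (u : EuclideanSpace ℝ (Fin n) → ℝ → ℝ)
    (hreg : ContDiffOn ℝ 2 (fun p : EuclideanSpace ℝ (Fin n) × ℝ => u p.1 p.2) (univ ×ˢ Ici 0))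
    (hpde : ∀ x, ∀ t > (0 : ℝ),
      deriv (deriv (fun s => u x s)) t - lap (fun z => u z t) x
        + deriv (fun s => u x s) t = 0)
    (hu0 : ∀ x, u x 0 = f x)
    (hu1 : ∀ x, derivWithin (fun s => u x s) (Ici 0) 0 = g x)
    (phi : ℝ → ℝ) (hphi0 : phi 0 = 0) (hphimono : MonotoneOn phi (Ici 0))
    (hphinn : ∀ t ≥ (0 : ℝ), 0 ≤ phi t)
    (hphio : Tendsto (fun t => phi t / t) atTop (𝓝 0)) :
    ∃ T, max (T0 f g phi) (deltaCC (CS f) (CS (f + g)) + dsupp f) ≤ T ∧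
      ∀ t ≥ T, ∃ p : EuclideanSpace ℝ (Fin n),
        critSet (fun z => u z t) ∩
          (CS (f + g) + phi t • closedBall (0 : EuclideanSpace ℝ (Fin n)) 1) = {p} := by
  obtain ⟨ut, utt, ux, utx, W⟩ := exists_dampedWave f g u hreg hpde hu0 hu1
  have hhc : Continuous (f + g) := hf.continuous.add hg.continuous
  have hhk : HasCompactSupport (f + g) := hfc.add hgc
  obtain ⟨R, hR⟩ :=
    ((hfc.isCompact.union hgc.isCompact).union hhk.isCompact).isBounded.subset_closedBall 0
  have hR' : ∀ x, R < ‖x‖ → x ∉ tsupport f ∪ tsupport g ∪ tsupport (f + g) := fun x hx hx' =>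
    hx.not_ge (mem_closedBall_zero_iff.1 (hR hx'))
  have hfR : ∀ x, R < ‖x‖ → f x = 0 := fun x hx =>
    image_eq_zero_of_notMem_tsupport fun h => hR' x hx (.inl (.inl h))
  have hgR : ∀ x, R < ‖x‖ → g x = 0 := fun x hx =>
    image_eq_zero_of_notMem_tsupport fun h => hR' x hx (.inl (.inr h))
  have hCS : CS (f + g) ⊆ closedBall 0 R :=
    convexHull_min (subset_union_right.trans hR) (convex_closedBall 0 R)
  obtain ⟨x₀, hx₀⟩ := Function.ne_iff.1 hne
  have hM : 0 < ∫ x, (f + g) x :=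
    hhc.integral_pos_of_hasCompactSupport_nonneg_nonzero hhk hpos hx₀
  have hm := centroid_mem_interior hhc hhk hpos hne
  obtain ⟨r, hr, hball⟩ := Metric.mem_nhds_iff.1 (mem_interior_iff_mem_nhds.1 hm)
  have hn' : (1 : ℝ) ≤ n := by exact_mod_cast hn
  obtain ⟨ε, hε, hε1, hεr⟩ : ∃ ε : ℝ, 0 < ε ∧ n * (n * ε) < 1 ∧ n * ε < r := by
    have hs : 0 < min 1 r := lt_min one_pos hr
    have e : n * (n * (min 1 r / (2 * (n * n)))) = min 1 r / 2 := by field_simp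
    have hp : 0 ≤ n * (min 1 r / (2 * (n * n))) := by positivity
    refine ⟨min 1 r / (2 * (n * n)), by positivity, ?_, ?_⟩
    · rw [e]
      linarith [min_le_left 1 r]
    · nlinarith [min_le_right 1 r]
  obtain ⟨δ, hδ, T₁, hT₁⟩ :=
    eventually_coneFilter (W.eventually_coneFilter hf hg hfc hgc hfR hgR hM hε)
  obtain ⟨T₂, hT₂⟩ := eventually_atTop.1 (eventually_add_lt_mul hphio R hδ)
  refine ⟨max (max (T0 f g phi) (deltaCC (CS f) (CS (f + g)) + dsupp f)) (max (max T₁ T₂) 1),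
    le_max_left _ _, fun t ht => ?_⟩
  simp only [ge_iff_le, max_le_iff] at ht
  obtain ⟨-, ⟨ht₁, ht₂⟩, ht1⟩ := ht
  have ht0 : 0 < t := one_pos.trans_le ht1
  have hsub : CS (f + g) ⊆ CS (f + g) + phi t • closedBall (0 : EuclideanSpace ℝ (Fin n)) 1 :=
    fun x hx => ⟨x, hx, 0, ⟨0, by simp, smul_zero _⟩, add_zero x⟩
  have hsub' : CS (f + g) + phi t • closedBall (0 : EuclideanSpace ℝ (Fin n)) 1 ⊆
      closedBall 0 (R + phi t) := by
    rintro _ ⟨y, hy, _, ⟨b, hb, rfl⟩, rfl⟩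
    refine mem_closedBall_zero_iff.2 ((norm_add_le _ _).trans
      (add_le_add (mem_closedBall_zero_iff.1 (hCS hy)) ?_))
    simpa [norm_smul, abs_of_nonneg (hphinn t ht0.le)] using
      mul_le_mul_of_nonneg_left (mem_closedBall_zero_iff.1 hb) (hphinn t ht0.le)
  have key := fun x (hx : x ∈ closedBall 0 (R + phi t)) => hT₁ t ht₁ x <| by
    rw [norm_smul, norm_inv, Real.norm_of_nonneg ht0.le, inv_mul_lt_iff₀ ht0, mul_comm]
    exact (mem_closedBall_zero_iff.1 hx).trans_lt (hT₂ t ht₂)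
  have hmaps : ∀ x ∈ closedBall 0 (R + phi t), WithLp.toLp 2 (fun j =>
      (t * ux j x t + x j * (ut x t + 1 / 2 * u x t)) / (ut x t + 1 / 2 * u x t)) ∈ CS (f + g) := by
    refine fun x hx => hball (mem_ball_iff_norm.2 (lt_of_le_of_lt ((norm_le_sum_abs _).trans
      (Finset.sum_le_sum fun j _ => ((key x hx).2 j).1.le)) ?_))
    simpa using hεr
  obtain ⟨p, hp, hfix⟩ := existsUnique_fixedPoint
    (G := fun j x => (t * ux j x t + x j * (ut x t + 1 / 2 * u x t)) / (ut x t + 1 / 2 * u x t))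
    (isCompact_closedBall _ _) (convex_closedBall _ _) ⟨_, hsub' (hsub (interior_subset hm))⟩
    hε.le hε1 (fun j x hx => ((key x hx).2 j).2.1) (fun j k x hx => ((key x hx).2 j).2.2 k)
    (fun x hx => hsub' (hsub (hmaps x hx)))
  have crit : ∀ x ∈ closedBall 0 (R + phi t), x ∈ critSet (fun z => u z t) ↔ x = p := fun x hx =>
    (W.mem_critSet_iff ht0 (key x hx).1.1 (key x hx).1.2.ne').trans (hfix x hx)
  refine ⟨p, Set.ext fun x => ⟨fun hx => (crit x (hsub' hx.2)).1 hx.1, ?_⟩⟩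
  rintro rfl
  refine ⟨(crit x hp).2 rfl, hsub ?_⟩
  convert hmaps x hp using 1
  ext j
  exact (hfix x hp).2 rfl j
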